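/- Each of the eight polynomials S₁,₂ = F₁F₂ + 2S, S₂,₃ = F₂F₃ + 2S, S₃,₄ = F₃F₄ + 2S, S₅,₆ = F₅F₆ + 2S, S₁,₂,₃ = F₁F₂F₃ + S·R₁, S₄,₅,₆ = F₄F₅F₆ + S·R₂, S₃,₄,₅,₆ = F₃F₄F₅F₆ + S·R, S₂,₃,₄,₅,₆ = F₂F₃F₄F₅F₆ + R₁·S·R defines a smooth surface in ℙ³(ℂ): the only common zero in ℂ⁴ of the four partial derivatives of each of these polynomials is the point 0. -/

import Mathlib

open MvPolynomial

/-- The quadric `S = y₀·y₁ − y₂·y₃`. -/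
noncomputable def polyS : MvPolynomial (Fin 4) ℂ := X 0 * X 1 - X 2 * X 3

/-- The six linear forms `F₁, …, F₆` (indexed by `Fin 6`). -/
noncomputable def polyF : Fin 6 → MvPolynomial (Fin 4) ℂ :=
  ![X 0,
    X 1,
    4 * X 0 - 2 * X 2 - 2 * X 3 + X 1,
    X 0 - 2 * X 2 - 2 * X 3 + 4 * X 1,
    X 0 + X 2 + X 3 + X 1,
    X 0 - X 2 - X 3 + X 1]
/-- The quadric `R = y₀² + y₁² + y₂² + y₃²`. -/
noncomputable def polyR : MvPolynomial (Fin 4) ℂ := X 0 ^ 2 + X 1 ^ 2 + X 2 ^ 2 + X 3 ^ 2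

/-- The linear form `R₁ = y₀ + 2y₂ + 3y₃ + 4y₁`. -/
noncomputable def polyR1 : MvPolynomial (Fin 4) ℂ := X 0 + 2 * X 2 + 3 * X 3 + 4 * X 1

/-- The linear form `R₂ = 4y₀ + 3y₂ + 2y₃ + y₁`. -/
noncomputable def polyR2 : MvPolynomial (Fin 4) ℂ := 4 * X 0 + 3 * X 2 + 2 * X 3 + X 1

noncomputable def polyS12 : MvPolynomial (Fin 4) ℂ := polyF 0 * polyF 1 + 2 * polyS
noncomputable def polyS23 : MvPolynomial (Fin 4) ℂ := polyF 1 * polyF 2 + 2 * polyS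
noncomputable def polyS34 : MvPolynomial (Fin 4) ℂ := polyF 2 * polyF 3 + 2 * polyS
noncomputable def polyS56 : MvPolynomial (Fin 4) ℂ := polyF 4 * polyF 5 + 2 * polyS
noncomputable def polyS123 : MvPolynomial (Fin 4) ℂ := polyF 0 * polyF 1 * polyF 2 + polyS * polyR1
noncomputable def polyS456 : MvPolynomial (Fin 4) ℂ := polyF 3 * polyF 4 * polyF 5 + polyS * polyR2
noncomputable def polyS3456 : MvPolynomial (Fin 4) ℂ :=
  polyF 2 * polyF 3 * polyF 4 * polyF 5 + polyS * polyR
noncomputable def polyS23456 : MvPolynomial (Fin 4) ℂ :=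
  polyF 1 * polyF 2 * polyF 3 * polyF 4 * polyF 5 + polyR1 * polyS * polyR

set_option linter.all false

/- Strategy. The four quadrics have an invertible Hessian, so they are plain linear algebra. For the
remaining four surfaces we reduce modulo a prime of good reduction (13 for the two cubics and the
quartic, 19 for the quintic): a nonzero complex zero of the gradient can be rescaled to be primitive
over a valuation ring of the complex numbers whose maximal ideal contains the prime, and then reduces
to a nonzero zero over the residue field. Over that residue field explicit Nullstellensatz identities
show that a power of each coordinate lies in the ideal of partial derivatives, one coordinate at a
time. We use the coordinates a = y0, b = y1, u = (y2 + y3) / 2, v = (y2 - y3) / 2, since all the linear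
forms F depend on a, b, u only. -/

/-- For every prime there is a valuation subring of the complex numbers lying over it. -/
lemma exists_place (p : ℕ) (hp : p.Prime) :
    ∃ B : ValuationSubring ℂ, (p : ℂ) ∈ B.nonunits := by
  let A : Subring ℂ := (Int.castRingHom ℂ).range
  let q : A := ⟨(p : ℂ), ⟨(p : ℤ), by simp⟩⟩
  have hI : Ideal.span {q} ≠ ⊤ := by
    rw [Ne, Ideal.span_singleton_eq_top]
    intro hu
    obtain ⟨w, hw⟩ := hu.exists_right_inv
    obtain ⟨m, hm⟩ := w.2
    have e : (p : ℂ) * (w : ℂ) = 1 := congrArg Subtype.val hw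
    rw [← hm] at e
    have e2 : (p : ℤ) * m = 1 := by
      have : (((p : ℤ) * m : ℤ) : ℂ) = ((1 : ℤ) : ℂ) := by push_cast; simpa using e
      exact_mod_cast this
    have := Int.isUnit_iff.mp (IsUnit.of_mul_eq_one m e2)
    have := hp.two_le
    omega
  obtain ⟨B, -, hB⟩ := Ideal.image_subset_nonunits_valuationSubring _ hI
  exact ⟨B, hB ⟨q, Ideal.subset_span rfl, rfl⟩⟩

lemma map_aeval_int {A K : Type} [CommRing A] [CommRing K] (r : A →+* K) (y : Fin 4 → A)
    (g : MvPolynomial (Fin 4) ℤ) : aeval (fun l => r (y l)) g = r (aeval y g) := by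
  have h2 : r.toIntAlgHom (aeval y g) = aeval (fun l => r (y l)) g := by
    rw [← AlgHom.comp_apply, comp_aeval]
    rfl
  exact h2.symm

lemma pderiv_two_zero (i : Fin 4) : pderiv i (2 : MvPolynomial (Fin 4) ℂ) = 0 := by
  rw [← map_ofNat (C : ℂ →+* MvPolynomial (Fin 4) ℂ) 2, pderiv_C]

lemma pderiv_three_zero (i : Fin 4) : pderiv i (3 : MvPolynomial (Fin 4) ℂ) = 0 := by
  rw [← map_ofNat (C : ℂ →+* MvPolynomial (Fin 4) ℂ) 3, pderiv_C]

lemma pderiv_four_zero (i : Fin 4) : pderiv i (4 : MvPolynomial (Fin 4) ℂ) = 0 := by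
  rw [← map_ofNat (C : ℂ →+* MvPolynomial (Fin 4) ℂ) 4, pderiv_C]

/-- The variables, with integral coefficients. -/
noncomputable def Y (i : Fin 4) : MvPolynomial (Fin 4) ℤ := X i

/-- A system of integral forms which has only the trivial zero over every field of characteristic
`p` has only the trivial zero over `ℂ`. -/
lemma transfer (p : ℕ) (hp : p.Prime) (f : Fin 4 → MvPolynomial (Fin 4) ℤ) (n : ℕ)
    (hf : ∀ (i : Fin 4) (c : ℂ) (x : Fin 4 → ℂ), aeval (fun j => c * x j) (f i) = c ^ n * aeval x (f i))
    (H : ∀ (k : Type) [Field k], (p : k) = 0 → ∀ y : Fin 4 → k, (∀ i, aeval y (f i) = 0) → y = 0)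
    (x : Fin 4 → ℂ) (hx : ∀ i, aeval x (f i) = 0) : x = 0 := by
  obtain ⟨B, hB⟩ := exists_place p hp
  by_contra hne
  obtain ⟨j, -, hj⟩ := Finset.exists_max_image Finset.univ (fun i => B.valuation (x i))
    ⟨0, Finset.mem_univ _⟩
  have hxj : x j ≠ 0 := by
    intro h0
    apply hne
    funext i
    have := hj i (Finset.mem_univ _)
    rw [h0, map_zero, le_zero_iff, map_eq_zero] at this
    exact this
  have hmem : ∀ i, (x j)⁻¹ * x i ∈ B := by
    intro i
    rw [← B.valuation_le_one_iff, map_mul, map_inv₀]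
    have h1 : B.valuation (x j) ≠ 0 := by simpa using hxj
    rw [inv_mul_le_iff₀ (zero_lt_iff.mpr h1), mul_one]
    exact hj i (Finset.mem_univ _)
  let y : Fin 4 → B := fun i => ⟨(x j)⁻¹ * x i, hmem i⟩
  have hy : ∀ i, aeval y (f i) = 0 := by
    intro i
    have h1 : aeval (fun l => (x j)⁻¹ * x l) (f i) = 0 := by rw [hf, hx, mul_zero]
    have h2 : B.subtype.toIntAlgHom (aeval y (f i)) = aeval (fun l => (x j)⁻¹ * x l) (f i) := by
      rw [← AlgHom.comp_apply, comp_aeval]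
      rfl
    rw [h1] at h2
    exact Subtype.ext h2
  let r : B →+* IsLocalRing.ResidueField B := IsLocalRing.residue B
  have hp0 : (p : IsLocalRing.ResidueField B) = 0 := by
    have h1 : r (p : B) = 0 := by
      rw [IsLocalRing.residue_eq_zero_iff, IsLocalRing.mem_maximalIdeal, mem_nonunits_iff]
      have h3 := B.mem_nonunits_iff_exists_mem_maximalIdeal.mp hB
      obtain ⟨h4, h5⟩ := h3
      exact (IsLocalRing.mem_maximalIdeal _).mp h5
    simpa using h1
  have h0 := H (IsLocalRing.ResidueField B) hp0 (fun i => r (y i)) (by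
    intro i
    exact (map_aeval_int r y (f i)).trans (by rw [hy, map_zero]))
  have h1 := congrFun h0 j
  have h2 : y j = 1 := Subtype.ext (inv_mul_cancel₀ hxj)
  simp [h2] at h1

/-- The partial derivatives of the `s123` form in the coordinates `(y₀, y₁, (y₂+y₃)/2, (y₂-y₃)/2)`. -/
noncomputable def grad_s123 : Fin 4 → MvPolynomial (Fin 4) ℤ :=
  ![10 * Y 0 * Y 1 + 5 * Y 1 ^ 2 + Y 1 * Y 2 - Y 1 * Y 3 - Y 2 ^ 2 + Y 3 ^ 2,
    5 * Y 0 ^ 2 + 10 * Y 0 * Y 1 + Y 0 * Y 2 - Y 0 * Y 3 - 4 * Y 2 ^ 2 + 4 * Y 3 ^ 2,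
    Y 0 * Y 1 - 2 * Y 0 * Y 2 - 8 * Y 1 * Y 2 - 15 * Y 2 ^ 2 + 2 * Y 2 * Y 3 + 5 * Y 3 ^ 2,
    -Y 0 * Y 1 + 2 * Y 0 * Y 3 + 8 * Y 1 * Y 3 + Y 2 ^ 2 + 10 * Y 2 * Y 3 - 3 * Y 3 ^ 2]

lemma cert_s123_0 {k : Type*} [Field k] (hp : (13 : k) = 0) (a b u v : k)
    (h0 : -3 * a * b + 5 * b ^ 2 + b * u - b * v - u ^ 2 + v ^ 2 = 0)
    (h1 : 5 * a ^ 2 - 3 * a * b + a * u - a * v - 4 * u ^ 2 + 4 * v ^ 2 = 0)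
    (h2 : a * b - 2 * a * u + 5 * b * u - 2 * u ^ 2 + 2 * u * v + 5 * v ^ 2 = 0)
    (h3 : -a * b + 2 * a * v - 5 * b * v + u ^ 2 - 3 * u * v - 3 * v ^ 2 = 0)
    : a = 0 := by
  have key : a ^ 5 = 0 := by
    linear_combination (a ^ 3 * 3 + a ^ 2 * (b * 4 - u * 2 - 4 * v) + a * (-b ^ 2 * 5 + b * (u * 3 - 2 * v) - u ^ 2
      * 3 + u * 4 * v) + b ^ 2 * (-u - v) + b * (-u ^ 2 - u * v)) * h0 +
      (-a ^ 3 * 5 + a ^ 2 * (b * 5 - u - v) + a * (b ^ 2 + b * (-u * 4 - 6 * v) - u ^ 2 * 3 - u * 5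
      * v) + b ^ 3 - b ^ 2 * 3 * v + b * (-u ^ 2 * 3 - u * 3 * v)) * h1 +
      (-a ^ 3 * 5 + a ^ 2 * (b - u - 3 * v) + a * (-b ^ 2 * 5 - b * u * 6 - u * 2 * v) + b ^ 3) * h2 +
      (a ^ 2 * (-b * 6 - u * 5 + v) + a * (b ^ 2 * 6 - b * u * 6 - u ^ 2 * 2) - b ^ 3) * h3 +
      (a ^ 5 * 2 - a ^ 4 * b * 2 + a ^ 3 * (b * (u * 2 + 3 * v) - u ^ 2 + u * 3 * v + 3 * v ^ 2) +
      a ^ 2 * (-b ^ 3 * 2 + b ^ 2 * (-u - 2 * v) + b * (u ^ 2 * 2 - 4 * v ^ 2) - u ^ 2 * 2 *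
      v + 2 * v ^ 3) + a * (b ^ 4 * 2 + b ^ 3 * (u + 2 * v) + b ^ 2 * (u ^ 2 - u * 2 * v + 3
      * v ^ 2) + b * (-u ^ 3 - u ^ 2 * 3 * v + u * 2 * v ^ 2 + 2 * v ^ 3) - u ^ 4 - u ^ 3 *
      2 * v + u ^ 2 * v ^ 2 + u * 2 * v ^ 3) + b ^ 3 * (u ^ 2 - v ^ 2) + b ^ 2 * (-u ^ 2 * v
      + v ^ 3) + b * (-u ^ 4 - u ^ 3 * v + u ^ 2 * v ^ 2 + u * v ^ 3)) * hp
  exact pow_eq_zero_iff (by norm_num) |>.mp key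

lemma cert_s123_1 {k : Type*} [Field k] (hp : (13 : k) = 0) (b u v : k)
    (h0 : 5 * b ^ 2 + b * u - b * v - u ^ 2 + v ^ 2 = 0)
    (h1 : -4 * u ^ 2 + 4 * v ^ 2 = 0)
    (h2 : 5 * b * u - 2 * u ^ 2 + 2 * u * v + 5 * v ^ 2 = 0)
    (h3 : -5 * b * v + u ^ 2 - 3 * u * v - 3 * v ^ 2 = 0)
    : b = 0 := by
  have key : b ^ 3 = 0 := by
    linear_combination (-b * 5 - u + v) * h0 +
      (-b * 6 - u * 3 + 3 * v) * h1 +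
      (b * 2) * h2 +
      (b * 2) * h3 +
      (b ^ 3 * 2 + b * (-u ^ 2 * 2 + 2 * v ^ 2) - u ^ 3 + u ^ 2 * v + u * v ^ 2 - v ^ 3) * hp
  exact pow_eq_zero_iff (by norm_num) |>.mp key

lemma cert_s123_2 {k : Type*} [Field k] (hp : (13 : k) = 0) (u v : k)
    (h0 : -u ^ 2 + v ^ 2 = 0)
    (h2 : -2 * u ^ 2 + 2 * u * v + 5 * v ^ 2 = 0)
    (h3 : u ^ 2 - 3 * u * v - 3 * v ^ 2 = 0)
    : u = 0 := by
  have key : u ^ 2 = 0 := by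
    linear_combination (6) * h0 +
      (-2) * h2 +
      (3) * h3 +
      (u * v + v ^ 2) * hp
  exact pow_eq_zero_iff (by norm_num) |>.mp key

lemma cert_s123_3 {k : Type*} [Field k] (hp : (13 : k) = 0) (v : k)
    (h0 : v ^ 2 = 0)
    : v = 0 := by
  have key : v ^ 2 = 0 := by
    linear_combination (1) * h0
  exact pow_eq_zero_iff (by norm_num) |>.mp key

lemma cert_s123 (k : Type) [Field k] (hp : ((13 : ℕ) : k) = 0) (y : Fin 4 → k)
    (h : ∀ i, aeval y (grad_s123 i) = 0) : y = 0 := by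
  push_cast at hp
  obtain ⟨a, ha⟩ : ∃ a, a = y 0 := ⟨_, rfl⟩
  obtain ⟨b, hb⟩ : ∃ b, b = y 1 := ⟨_, rfl⟩
  obtain ⟨u, hu⟩ : ∃ u, u = y 2 := ⟨_, rfl⟩
  obtain ⟨v, hv⟩ : ∃ v, v = y 3 := ⟨_, rfl⟩
  have h0 : -3 * a * b + 5 * b ^ 2 + b * u - b * v - u ^ 2 + v ^ 2 = 0 := by
    have e := h 0
    simp [grad_s123, Y, ← ha, ← hb, ← hu, ← hv] at e
    linear_combination e + (-a * b) * hp
  have h1 : 5 * a ^ 2 - 3 * a * b + a * u - a * v - 4 * u ^ 2 + 4 * v ^ 2 = 0 := by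
    have e := h 1
    simp [grad_s123, Y, ← ha, ← hb, ← hu, ← hv] at e
    linear_combination e + (-a * b) * hp
  have h2 : a * b - 2 * a * u + 5 * b * u - 2 * u ^ 2 + 2 * u * v + 5 * v ^ 2 = 0 := by
    have e := h 2
    simp [grad_s123, Y, ← ha, ← hb, ← hu, ← hv] at e
    linear_combination e + (b * u + u ^ 2) * hp
  have h3 : -a * b + 2 * a * v - 5 * b * v + u ^ 2 - 3 * u * v - 3 * v ^ 2 = 0 := by
    have e := h 3
    simp [grad_s123, Y, ← ha, ← hb, ← hu, ← hv] at e
    linear_combination e + (-b * v - u * v) * hp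
  have z0 : a = 0 := cert_s123_0 hp a b u v (by linear_combination h0) (by linear_combination h1) (by linear_combination h2) (by linear_combination h3)
  have z1 : b = 0 := cert_s123_1 hp b u v 
    (by have e := h0; simp only [z0] at e; linear_combination e) 
    (by have e := h1; simp only [z0] at e; linear_combination e) 
    (by have e := h2; simp only [z0] at e; linear_combination e) 
    (by have e := h3; simp only [z0] at e; linear_combination e)
  have z2 : u = 0 := cert_s123_2 hp u v 
    (by have e := h0; simp only [z0, z1] at e; linear_combination e) 
    (by have e := h2; simp only [z0, z1] at e; linear_combination e) 
    (by have e := h3; simp only [z0, z1] at e; linear_combination e)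
  have z3 : v = 0 := cert_s123_3 hp v 
    (by have e := h0; simp only [z0, z1, z2] at e; linear_combination e)
  funext i
  fin_cases i
  · exact ha.symm.trans z0
  · exact hb.symm.trans z1
  · exact hu.symm.trans z2
  · exact hv.symm.trans z3

/-- The partial derivatives of the `s456` form in the coordinates `(y₀, y₁, (y₂+y₃)/2, (y₂-y₃)/2)`. -/
noncomputable def grad_s456 : Fin 4 → MvPolynomial (Fin 4) ℤ :=
  ![3 * Y 0 ^ 2 + 20 * Y 0 * Y 1 - 8 * Y 0 * Y 2 + 10 * Y 1 ^ 2 - 3 * Y 1 * Y 2 + Y 1 * Y 3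
      - 8 * Y 2 ^ 2 + 4 * Y 3 ^ 2,
    10 * Y 0 ^ 2 + 20 * Y 0 * Y 1 - 3 * Y 0 * Y 2 + Y 0 * Y 3 + 12 * Y 1 ^ 2 - 8 * Y 1 * Y 2
      - 17 * Y 2 ^ 2 + Y 3 ^ 2,
    -4 * Y 0 ^ 2 - 3 * Y 0 * Y 1 - 16 * Y 0 * Y 2 - 4 * Y 1 ^ 2 - 34 * Y 1 * Y 2
      + 33 * Y 2 ^ 2 - 2 * Y 2 * Y 3 + 5 * Y 3 ^ 2,
    Y 0 * Y 1 + 8 * Y 0 * Y 3 + 2 * Y 1 * Y 3 - Y 2 ^ 2 + 10 * Y 2 * Y 3 + 3 * Y 3 ^ 2]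

lemma cert_s456_0 {k : Type*} [Field k] (hp : (13 : k) = 0) (a b u v : k)
    (h0 : 3 * a ^ 2 - 6 * a * b + 5 * a * u - 3 * b ^ 2 - 3 * b * u + b * v + 5 * u ^ 2
      + 4 * v ^ 2 = 0)
    (h1 : -3 * a ^ 2 - 6 * a * b - 3 * a * u + a * v - b ^ 2 + 5 * b * u - 4 * u ^ 2 + v ^ 2 = 0)
    (h2 : -4 * a ^ 2 - 3 * a * b - 3 * a * u - 4 * b ^ 2 + 5 * b * u - 6 * u ^ 2 - 2 * u * v
      + 5 * v ^ 2 = 0)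
    (h3 : a * b - 5 * a * v + 2 * b * v - u ^ 2 - 3 * u * v + 3 * v ^ 2 = 0)
    : a = 0 := by
  have key : a ^ 5 = 0 := by
    linear_combination (a ^ 3 * 3 + a ^ 2 * (b * 5 + u - 6 * v) + a * (-b ^ 2 * 4 + b * (-u * 3 + 6 * v)) - b ^ 3 *
      6 + b ^ 2 * (u * 3 + v) + b * (u ^ 2 * 4 + u * 6 * v)) * h0 +
      (-a ^ 3 * 5 + a ^ 2 * (-b + u - 2 * v) + a * (-b ^ 2 * 6 + b * (-u * 5 - 5 * v)) - b ^ 3 * 6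
      + b ^ 2 * (-u * 2 - 2 * v) + b * (u ^ 2 * 5 - u * 5 * v)) * h1 +
      (-a ^ 3 * 4 + a ^ 2 * (u * 4 + 6 * v) + a * (b ^ 2 * 6 + b * (u * 6 + 4 * v)) + b ^ 3 * 6 + b
      ^ 2 * (u * 6 - 3 * v) + b * u * 4 * v) * h2 +
      (-a ^ 3 * 3 + a ^ 2 * (b * 4 + u * 3 + 3 * v) - a * b ^ 2 * 4 + b ^ 3 * 4) * h3 +
      (-a ^ 5 * 3 + a ^ 4 * (-b * 3 - u * 2 + 2 * v) + a ^ 3 * (b ^ 2 * 2 + b * (u * 5 - 2 * v) - u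
      ^ 2 * 4 + u * 3 * v + 3 * v ^ 2) + a ^ 2 * (b ^ 2 * (u * 3 - 2 * v) + b * (-u ^ 2 * 2
      - u * 6 * v - 2 * v ^ 2) + u ^ 3 * 2 + u ^ 2 * 6 * v - u * v ^ 2 - v ^ 3) + a * (-b ^
      4 * 4 + b ^ 3 * (u * 4 + 4 * v) + b ^ 2 * (u ^ 2 * 5 + u * 2 * v) + b * (u ^ 3 * 2 - u
      ^ 2 * 4 * v - 3 * v ^ 3)) + b ^ 4 * (u - v) + b ^ 3 * (u ^ 2 * 4 + u * 6 * v - v ^ 2)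
      + b ^ 2 * (-u * 4 * v ^ 2 + v ^ 3) + b * (-u ^ 3 * 2 * v - u ^ 2 * v ^ 2 - u * 3 * v ^
      3)) * hp
  exact pow_eq_zero_iff (by norm_num) |>.mp key

lemma cert_s456_1 {k : Type*} [Field k] (hp : (13 : k) = 0) (b u v : k)
    (h0 : -3 * b ^ 2 - 3 * b * u + b * v + 5 * u ^ 2 + 4 * v ^ 2 = 0)
    (h1 : -b ^ 2 + 5 * b * u - 4 * u ^ 2 + v ^ 2 = 0)
    (h2 : -4 * b ^ 2 + 5 * b * u - 6 * u ^ 2 - 2 * u * v + 5 * v ^ 2 = 0)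
    (h3 : 2 * b * v - u ^ 2 - 3 * u * v + 3 * v ^ 2 = 0)
    : b = 0 := by
  have key : b ^ 3 = 0 := by
    linear_combination (-u * 2 - v) * h0 +
      (-u) * h1 +
      (b * 3 - u + 6 * v) * h2 +
      (b * 4) * h3 +
      (b ^ 3 + b ^ 2 * (-u * 2 + v) + b * (u ^ 2 * 2 - u * v - 2 * v ^ 2) + u ^ 2 * 3 * v + u * 2 *
      v ^ 2 - 2 * v ^ 3) * hp
  exact pow_eq_zero_iff (by norm_num) |>.mp key

lemma cert_s456_2 {k : Type*} [Field k] (hp : (13 : k) = 0) (u v : k)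
    (h0 : 5 * u ^ 2 + 4 * v ^ 2 = 0)
    (h1 : -4 * u ^ 2 + v ^ 2 = 0)
    : u = 0 := by
  have key : u ^ 2 = 0 := by
    linear_combination (5) * h0 +
      (6) * h1 +
      (-2 * v ^ 2) * hp
  exact pow_eq_zero_iff (by norm_num) |>.mp key

lemma cert_s456_3 {k : Type*} [Field k] (hp : (13 : k) = 0) (v : k)
    (h0 : 4 * v ^ 2 = 0)
    : v = 0 := by
  have key : v ^ 2 = 0 := by
    linear_combination (-3) * h0 +
      (v ^ 2) * hp
  exact pow_eq_zero_iff (by norm_num) |>.mp key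

lemma cert_s456 (k : Type) [Field k] (hp : ((13 : ℕ) : k) = 0) (y : Fin 4 → k)
    (h : ∀ i, aeval y (grad_s456 i) = 0) : y = 0 := by
  push_cast at hp
  obtain ⟨a, ha⟩ : ∃ a, a = y 0 := ⟨_, rfl⟩
  obtain ⟨b, hb⟩ : ∃ b, b = y 1 := ⟨_, rfl⟩
  obtain ⟨u, hu⟩ : ∃ u, u = y 2 := ⟨_, rfl⟩
  obtain ⟨v, hv⟩ : ∃ v, v = y 3 := ⟨_, rfl⟩
  have h0 : 3 * a ^ 2 - 6 * a * b + 5 * a * u - 3 * b ^ 2 - 3 * b * u + b * v + 5 * u ^ 2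
      + 4 * v ^ 2 = 0 := by
    have e := h 0
    simp [grad_s456, Y, ← ha, ← hb, ← hu, ← hv] at e
    linear_combination e + (a * (-b * 2 + u) - b ^ 2 + u ^ 2) * hp
  have h1 : -3 * a ^ 2 - 6 * a * b - 3 * a * u + a * v - b ^ 2 + 5 * b * u - 4 * u ^ 2 + v ^ 2 = 0 := by
    have e := h 1
    simp [grad_s456, Y, ← ha, ← hb, ← hu, ← hv] at e
    linear_combination e + (-a ^ 2 - a * b * 2 - b ^ 2 + b * u + u ^ 2) * hp
  have h2 : -4 * a ^ 2 - 3 * a * b - 3 * a * u - 4 * b ^ 2 + 5 * b * u - 6 * u ^ 2 - 2 * u * v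
      + 5 * v ^ 2 = 0 := by
    have e := h 2
    simp [grad_s456, Y, ← ha, ← hb, ← hu, ← hv] at e
    linear_combination e + (a * u + b * u * 3 - u ^ 2 * 3) * hp
  have h3 : a * b - 5 * a * v + 2 * b * v - u ^ 2 - 3 * u * v + 3 * v ^ 2 = 0 := by
    have e := h 3
    simp [grad_s456, Y, ← ha, ← hb, ← hu, ← hv] at e
    linear_combination e + (-a * v - u * v) * hp
  have z0 : a = 0 := cert_s456_0 hp a b u v (by linear_combination h0) (by linear_combination h1) (by linear_combination h2) (by linear_combination h3)
  have z1 : b = 0 := cert_s456_1 hp b u v 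
    (by have e := h0; simp only [z0] at e; linear_combination e) 
    (by have e := h1; simp only [z0] at e; linear_combination e) 
    (by have e := h2; simp only [z0] at e; linear_combination e) 
    (by have e := h3; simp only [z0] at e; linear_combination e)
  have z2 : u = 0 := cert_s456_2 hp u v 
    (by have e := h0; simp only [z0, z1] at e; linear_combination e) 
    (by have e := h1; simp only [z0, z1] at e; linear_combination e)
  have z3 : v = 0 := cert_s456_3 hp v 
    (by have e := h0; simp only [z0, z1, z2] at e; linear_combination e)
  funext i
  fin_cases i
  · exact ha.symm.trans z0
  · exact hb.symm.trans z1
  · exact hu.symm.trans z2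
  · exact hv.symm.trans z3

/-- The partial derivatives of the `s3456` form in the coordinates `(y₀, y₁, (y₂+y₃)/2, (y₂-y₃)/2)`. -/
noncomputable def grad_s3456 : Fin 4 → MvPolynomial (Fin 4) ℤ :=
  ![16 * Y 0 ^ 3 + 78 * Y 0 ^ 2 * Y 1 - 60 * Y 0 ^ 2 * Y 2 + 84 * Y 0 * Y 1 ^ 2
      - 120 * Y 0 * Y 1 * Y 2 - 2 * Y 0 * Y 2 ^ 2 + 2 * Y 0 * Y 3 ^ 2 + 26 * Y 1 ^ 3
      - 60 * Y 1 ^ 2 * Y 2 - 34 * Y 1 * Y 2 ^ 2 + 2 * Y 1 * Y 3 ^ 2 + 80 * Y 2 ^ 3,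
    26 * Y 0 ^ 3 + 84 * Y 0 ^ 2 * Y 1 - 60 * Y 0 ^ 2 * Y 2 + 78 * Y 0 * Y 1 ^ 2
      - 120 * Y 0 * Y 1 * Y 2 - 34 * Y 0 * Y 2 ^ 2 + 2 * Y 0 * Y 3 ^ 2 + 16 * Y 1 ^ 3
      - 60 * Y 1 ^ 2 * Y 2 - 2 * Y 1 * Y 2 ^ 2 + 2 * Y 1 * Y 3 ^ 2 + 80 * Y 2 ^ 3,
    -20 * Y 0 ^ 3 - 60 * Y 0 ^ 2 * Y 1 - 2 * Y 0 ^ 2 * Y 2 - 60 * Y 0 * Y 1 ^ 2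
      - 68 * Y 0 * Y 1 * Y 2 + 240 * Y 0 * Y 2 ^ 2 - 20 * Y 1 ^ 3 - 2 * Y 1 ^ 2 * Y 2
      + 240 * Y 1 * Y 2 ^ 2 - 264 * Y 2 ^ 3,
    2 * Y 0 ^ 2 * Y 3 + 4 * Y 0 * Y 1 * Y 3 + 2 * Y 1 ^ 2 * Y 3 + 8 * Y 3 ^ 3]

set_option maxHeartbeats 40000000 in
lemma cert_s3456_0 {k : Type*} [Field k] (hp : (13 : k) = 0) (a b u v : k)
    (h0 : 3 * a ^ 3 + 5 * a ^ 2 * u + 6 * a * b ^ 2 - 3 * a * b * u - 2 * a * u ^ 2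
      + 2 * a * v ^ 2 + 5 * b ^ 2 * u + 5 * b * u ^ 2 + 2 * b * v ^ 2 + 2 * u ^ 3 = 0)
    (h1 : 6 * a ^ 2 * b + 5 * a ^ 2 * u - 3 * a * b * u + 5 * a * u ^ 2 + 2 * a * v ^ 2
      + 3 * b ^ 3 + 5 * b ^ 2 * u - 2 * b * u ^ 2 + 2 * b * v ^ 2 + 2 * u ^ 3 = 0)
    (h2 : 6 * a ^ 3 + 5 * a ^ 2 * b - 2 * a ^ 2 * u + 5 * a * b ^ 2 - 3 * a * b * u
      + 6 * a * u ^ 2 + 6 * b ^ 3 - 2 * b ^ 2 * u + 6 * b * u ^ 2 - 4 * u ^ 3 = 0)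
    (h3 : 2 * a ^ 2 * v + 4 * a * b * v + 2 * b ^ 2 * v - 5 * v ^ 3 = 0)
    : a = 0 := by
  have key : a ^ 9 = 0 := by
    linear_combination (-a ^ 6 + a ^ 5 * (b * 6 + u * 4) + a ^ 4 * (-b ^ 2 * 6 - b * u * 2 + u ^ 2 * 2 - 5 * v ^ 2)
      + a ^ 3 * (-b ^ 3 * 4 + b ^ 2 * u * 2 + b * (u ^ 2 * 5 + 3 * v ^ 2) - u * 2 * v ^ 2) +
      a ^ 2 * (b ^ 4 * 4 + b ^ 3 * u + b ^ 2 * (u ^ 2 * 3 + 5 * v ^ 2) - b * u * 2 * v ^ 2)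
      + a * (-b ^ 5 * 3 + b ^ 4 * u - b ^ 3 * 4 * v ^ 2 - b ^ 2 * u * v ^ 2 + b * (u ^ 2 * 6
      * v ^ 2 + 4 * v ^ 4)) + b ^ 5 * u * 2 + b ^ 4 * (u ^ 2 - 6 * v ^ 2) + b ^ 3 * u * 3 *
      v ^ 2 - b ^ 2 * u ^ 2 * 3 * v ^ 2 + b * u * 6 * v ^ 4 - u ^ 2 * 4 * v ^ 4) * h0 +
      (a ^ 6 * 4 + a ^ 5 * u * 5 + a ^ 4 * (-b ^ 2 + b * u * 2 - u ^ 2 * 5 + 5 * v ^ 2) + a ^ 3 *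
      (b ^ 3 * 6 + b * (-u ^ 2 * 5 - 5 * v ^ 2) - u * 3 * v ^ 2) + a ^ 2 * (b ^ 4 * 4 - b ^
      3 * u * 6 + b ^ 2 * (-u ^ 2 * 3 + v ^ 2) + b * u * 2 * v ^ 2 - u ^ 2 * v ^ 2) + a *
      (-b ^ 5 * 3 - b ^ 4 * u * 5 - b ^ 3 * 4 * v ^ 2 + b ^ 2 * u * 2 * v ^ 2 + b * (-u ^ 2
      * 6 * v ^ 2 - 4 * v ^ 4)) + b ^ 6 * 4 + b ^ 5 * u * 3 + b ^ 4 * (-u ^ 2 + 6 * v ^ 2) +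
      b ^ 3 * u * v ^ 2 + b ^ 2 * u ^ 2 * 3 * v ^ 2 - b * u * 6 * v ^ 4 + u ^ 2 * 4 * v ^ 4) * h1 +
      (a ^ 6 * 5 + a ^ 5 * (b * 4 - u * 5) + a ^ 4 * (b ^ 2 * 3 - b * u * 6 + u ^ 2 * 5 - 4 * v ^
      2) + a ^ 3 * (-b ^ 3 * 5 - b ^ 2 * u * 2 - b * 4 * v ^ 2 + u * 2 * v ^ 2) + a ^ 2 * (b
      ^ 3 * u * 6 - b * u * v ^ 2 + u ^ 2 * 6 * v ^ 2 + 4 * v ^ 4) + a * (b ^ 5 + b ^ 4 * u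
      * 6 - b * 4 * v ^ 4 - u * 6 * v ^ 4) - b ^ 6 * 2 + b ^ 5 * u + b * u * 6 * v ^ 4) * h2 +
      (-a ^ 5 * 3 * v + a ^ 4 * (b * 6 * v - u * 3 * v) + a ^ 3 * (b ^ 2 * 2 * v + b * u * 2 * v -
      u ^ 2 * 6 * v) + a ^ 2 * (-b ^ 3 * 3 * v - b ^ 2 * u * 6 * v) - a * b ^ 3 * u * 6 * v) * h3 +
      (-a ^ 9 * 2 + a ^ 8 * (-b * 7 + u) + a ^ 7 * (-b ^ 2 * 3 + b * u * 3 - u ^ 2 * 11 + 3 * v ^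
      2) + a ^ 6 * (-b ^ 3 * 5 + b ^ 2 * u * 7 + b * (-u ^ 2 * 3 - v ^ 2) + u ^ 3 * 4 - u *
      2 * v ^ 2) + a ^ 5 * (-b ^ 4 * 2 - b ^ 3 * u * 2 + b ^ 2 * (-u ^ 2 * 14 + 5 * v ^ 2) +
      b * u ^ 3 * 4 - u ^ 4 * 3 - 3 * v ^ 4) + a ^ 4 * (b ^ 5 - b ^ 4 * u + b ^ 3 * v ^ 2 +
      b ^ 2 * (u ^ 3 * 9 - u * 4 * v ^ 2) + b * (-u ^ 4 * 3 + u ^ 2 * 7 * v ^ 2 + 2 * v ^ 4)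
      + u ^ 5 * 2 + u * 3 * v ^ 4) + a ^ 3 * (b ^ 6 + b ^ 4 * (u ^ 2 * 5 + 3 * v ^ 2) + b ^
      3 * (-u ^ 3 * 2 + u * 7 * v ^ 2) + b ^ 2 * (-u ^ 4 * 2 + u ^ 2 * 4 * v ^ 2 + 2 * v ^
      4) - b * u ^ 3 * v ^ 2 - u ^ 4 * v ^ 2 - u ^ 2 * 4 * v ^ 4) + a ^ 2 * (-b ^ 7 - b ^ 6
      * u * 12 + b ^ 5 * (u ^ 2 * 2 - v ^ 2) - b ^ 4 * u ^ 3 * 6 + b ^ 3 * (u ^ 4 - u ^ 2 *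
      9 * v ^ 2 - 3 * v ^ 4) + b ^ 2 * u ^ 3 * v ^ 2 + u ^ 5 * 2 * v ^ 2 + u ^ 3 * 4 * v ^
      4) + a * (b ^ 8 + b ^ 6 * (u ^ 2 * 3 + 4 * v ^ 2) + b ^ 5 * (-u ^ 3 * 4 + u * 2 * v ^
      2) + b ^ 4 * (u ^ 4 * 3 + u ^ 2 * v ^ 2 + 4 * v ^ 4) + b ^ 3 * (u ^ 3 * 2 * v ^ 2 - u
      * 6 * v ^ 4) + b ^ 2 * (-u ^ 4 * 5 * v ^ 2 + u ^ 2 * 2 * v ^ 4) + b * u ^ 3 * 2 * v ^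
      4 - u ^ 4 * 4 * v ^ 4) - b ^ 8 * u * 3 - b ^ 7 * 2 * v ^ 2 + b ^ 6 * (-u ^ 3 * 2 - u *
      v ^ 2) + b ^ 5 * (-u ^ 4 + u ^ 2 * v ^ 2) + b ^ 4 * (-u ^ 3 * v ^ 2 - u * 2 * v ^ 4) +
      b ^ 3 * u ^ 4 * v ^ 2 - b ^ 2 * u ^ 3 * 6 * v ^ 4 + b * u ^ 4 * 4 * v ^ 4) * hp
  exact pow_eq_zero_iff (by norm_num) |>.mp key

lemma cert_s3456_1 {k : Type*} [Field k] (hp : (13 : k) = 0) (b u v : k)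
    (h0 : 5 * b ^ 2 * u + 5 * b * u ^ 2 + 2 * b * v ^ 2 + 2 * u ^ 3 = 0)
    (h1 : 3 * b ^ 3 + 5 * b ^ 2 * u - 2 * b * u ^ 2 + 2 * b * v ^ 2 + 2 * u ^ 3 = 0)
    (h2 : 6 * b ^ 3 - 2 * b ^ 2 * u + 6 * b * u ^ 2 - 4 * u ^ 3 = 0)
    : b = 0 := by
  have key : b ^ 4 = 0 := by
    linear_combination (-b * 4 - u * 6) * h0 +
      (b * 4 + u * 6) * h1 +
      (-b * 4) * h2 +
      (b ^ 4 - b ^ 3 * u * 2 + b ^ 2 * u ^ 2 * 4 + b * u ^ 3 * 2) * hp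
  exact pow_eq_zero_iff (by norm_num) |>.mp key

lemma cert_s3456_2 {k : Type*} [Field k] (hp : (13 : k) = 0) (u v : k)
    (h0 : 2 * u ^ 3 = 0)
    : u = 0 := by
  have key : u ^ 3 = 0 := by
    linear_combination (-6) * h0 +
      (u ^ 3) * hp
  exact pow_eq_zero_iff (by norm_num) |>.mp key

lemma cert_s3456_3 {k : Type*} [Field k] (hp : (13 : k) = 0) (v : k)
    (h3 : -5 * v ^ 3 = 0)
    : v = 0 := by
  have key : v ^ 3 = 0 := by
    linear_combination (5) * h3 +
      (2 * v ^ 3) * hp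
  exact pow_eq_zero_iff (by norm_num) |>.mp key

lemma cert_s3456 (k : Type) [Field k] (hp : ((13 : ℕ) : k) = 0) (y : Fin 4 → k)
    (h : ∀ i, aeval y (grad_s3456 i) = 0) : y = 0 := by
  push_cast at hp
  obtain ⟨a, ha⟩ : ∃ a, a = y 0 := ⟨_, rfl⟩
  obtain ⟨b, hb⟩ : ∃ b, b = y 1 := ⟨_, rfl⟩
  obtain ⟨u, hu⟩ : ∃ u, u = y 2 := ⟨_, rfl⟩
  obtain ⟨v, hv⟩ : ∃ v, v = y 3 := ⟨_, rfl⟩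
  have h0 : 3 * a ^ 3 + 5 * a ^ 2 * u + 6 * a * b ^ 2 - 3 * a * b * u - 2 * a * u ^ 2
      + 2 * a * v ^ 2 + 5 * b ^ 2 * u + 5 * b * u ^ 2 + 2 * b * v ^ 2 + 2 * u ^ 3 = 0 := by
    have e := h 0
    simp [grad_s3456, Y, ← ha, ← hb, ← hu, ← hv] at e
    linear_combination e + (-a ^ 3 + a ^ 2 * (-b * 6 + u * 5) + a * (-b ^ 2 * 6 + b * u * 9) - b ^ 3 * 2 + b ^ 2 * u * 5
      + b * u ^ 2 * 3 - u ^ 3 * 6) * hp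
  have h1 : 6 * a ^ 2 * b + 5 * a ^ 2 * u - 3 * a * b * u + 5 * a * u ^ 2 + 2 * a * v ^ 2
      + 3 * b ^ 3 + 5 * b ^ 2 * u - 2 * b * u ^ 2 + 2 * b * v ^ 2 + 2 * u ^ 3 = 0 := by
    have e := h 1
    simp [grad_s3456, Y, ← ha, ← hb, ← hu, ← hv] at e
    linear_combination e + (-a ^ 3 * 2 + a ^ 2 * (-b * 6 + u * 5) + a * (-b ^ 2 * 6 + b * u * 9 + u ^ 2 * 3) - b ^ 3 + b
      ^ 2 * u * 5 - u ^ 3 * 6) * hp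
  have h2 : 6 * a ^ 3 + 5 * a ^ 2 * b - 2 * a ^ 2 * u + 5 * a * b ^ 2 - 3 * a * b * u
      + 6 * a * u ^ 2 + 6 * b ^ 3 - 2 * b ^ 2 * u + 6 * b * u ^ 2 - 4 * u ^ 3 = 0 := by
    have e := h 2
    simp [grad_s3456, Y, ← ha, ← hb, ← hu, ← hv] at e
    linear_combination e + (a ^ 3 * 2 + a ^ 2 * b * 5 + a * (b ^ 2 * 5 + b * u * 5 - u ^ 2 * 18) + b ^ 3 * 2 - b * u ^ 2
      * 18 + u ^ 3 * 20) * hp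
  have h3 : 2 * a ^ 2 * v + 4 * a * b * v + 2 * b ^ 2 * v - 5 * v ^ 3 = 0 := by
    have e := h 3
    simp [grad_s3456, Y, ← ha, ← hb, ← hu, ← hv] at e
    linear_combination e + (-v ^ 3) * hp
  have z0 : a = 0 := cert_s3456_0 hp a b u v (by linear_combination h0) (by linear_combination h1) (by linear_combination h2) (by linear_combination h3)
  have z1 : b = 0 := cert_s3456_1 hp b u v 
    (by have e := h0; simp only [z0] at e; linear_combination e) 
    (by have e := h1; simp only [z0] at e; linear_combination e) 
    (by have e := h2; simp only [z0] at e; linear_combination e)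
  have z2 : u = 0 := cert_s3456_2 hp u v 
    (by have e := h0; simp only [z0, z1] at e; linear_combination e)
  have z3 : v = 0 := cert_s3456_3 hp v 
    (by have e := h3; simp only [z0, z1, z2] at e; linear_combination e)
  funext i
  fin_cases i
  · exact ha.symm.trans z0
  · exact hb.symm.trans z1
  · exact hu.symm.trans z2
  · exact hv.symm.trans z3

set_option maxHeartbeats 4000000 in
/-- The partial derivatives of the `s23456` form in the coordinates `(y₀, y₁, (y₂+y₃)/2, (y₂-y₃)/2)`. -/
noncomputable def grad_s23456 : Fin 4 → MvPolynomial (Fin 4) ℤ :=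
  ![20 * Y 0 ^ 3 * Y 1 + 87 * Y 0 ^ 2 * Y 1 ^ 2 - 45 * Y 0 ^ 2 * Y 1 * Y 2
      - 3 * Y 0 ^ 2 * Y 1 * Y 3 - 3 * Y 0 ^ 2 * Y 2 ^ 2 + 3 * Y 0 ^ 2 * Y 3 ^ 2
      + 86 * Y 0 * Y 1 ^ 3 - 120 * Y 0 * Y 1 ^ 2 * Y 2 - 4 * Y 0 * Y 1 * Y 2 ^ 2
      + 12 * Y 0 * Y 1 * Y 3 ^ 2 - 10 * Y 0 * Y 2 ^ 3 + 2 * Y 0 * Y 2 ^ 2 * Y 3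
      + 10 * Y 0 * Y 2 * Y 3 ^ 2 - 2 * Y 0 * Y 3 ^ 3 + 29 * Y 1 ^ 4 - 55 * Y 1 ^ 3 * Y 2
      - Y 1 ^ 3 * Y 3 - 29 * Y 1 ^ 2 * Y 2 ^ 2 + 9 * Y 1 ^ 2 * Y 3 ^ 2
      + 90 * Y 1 * Y 2 ^ 3 - 2 * Y 1 * Y 2 ^ 2 * Y 3 + 10 * Y 1 * Y 2 * Y 3 ^ 2
      - 2 * Y 1 * Y 3 ^ 3 - 2 * Y 2 ^ 4 + 2 * Y 3 ^ 4,
    5 * Y 0 ^ 4 + 58 * Y 0 ^ 3 * Y 1 - 15 * Y 0 ^ 3 * Y 2 - Y 0 ^ 3 * Y 3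
      + 129 * Y 0 ^ 2 * Y 1 ^ 2 - 120 * Y 0 ^ 2 * Y 1 * Y 2 - 2 * Y 0 ^ 2 * Y 2 ^ 2
      + 6 * Y 0 ^ 2 * Y 3 ^ 2 + 116 * Y 0 * Y 1 ^ 3 - 165 * Y 0 * Y 1 ^ 2 * Y 2
      - 3 * Y 0 * Y 1 ^ 2 * Y 3 - 58 * Y 0 * Y 1 * Y 2 ^ 2 + 18 * Y 0 * Y 1 * Y 3 ^ 2
      + 90 * Y 0 * Y 2 ^ 3 - 2 * Y 0 * Y 2 ^ 2 * Y 3 + 10 * Y 0 * Y 2 * Y 3 ^ 2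
      - 2 * Y 0 * Y 3 ^ 3 + 20 * Y 1 ^ 4 - 80 * Y 1 ^ 3 * Y 2 - 12 * Y 1 ^ 2 * Y 2 ^ 2
      + 12 * Y 1 ^ 2 * Y 3 ^ 2 + 150 * Y 1 * Y 2 ^ 3 + 2 * Y 1 * Y 2 ^ 2 * Y 3
      + 10 * Y 1 * Y 2 * Y 3 ^ 2 - 2 * Y 1 * Y 3 ^ 3 - 72 * Y 2 ^ 4 + 8 * Y 3 ^ 4,
    -15 * Y 0 ^ 3 * Y 1 - 2 * Y 0 ^ 3 * Y 2 - 60 * Y 0 ^ 2 * Y 1 ^ 2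
      - 4 * Y 0 ^ 2 * Y 1 * Y 2 - 15 * Y 0 ^ 2 * Y 2 ^ 2 + 2 * Y 0 ^ 2 * Y 2 * Y 3
      + 5 * Y 0 ^ 2 * Y 3 ^ 2 - 55 * Y 0 * Y 1 ^ 3 - 58 * Y 0 * Y 1 ^ 2 * Y 2
      + 270 * Y 0 * Y 1 * Y 2 ^ 2 - 4 * Y 0 * Y 1 * Y 2 * Y 3 + 10 * Y 0 * Y 1 * Y 3 ^ 2
      - 8 * Y 0 * Y 2 ^ 3 - 20 * Y 1 ^ 4 - 8 * Y 1 ^ 3 * Y 2 + 225 * Y 1 ^ 2 * Y 2 ^ 2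
      + 2 * Y 1 ^ 2 * Y 2 * Y 3 + 5 * Y 1 ^ 2 * Y 3 ^ 2 - 288 * Y 1 * Y 2 ^ 3
      - 50 * Y 2 ^ 4 + 8 * Y 2 ^ 3 * Y 3 + 10 * Y 3 ^ 4,
    -Y 0 ^ 3 * Y 1 + 2 * Y 0 ^ 3 * Y 3 + 12 * Y 0 ^ 2 * Y 1 * Y 3 + Y 0 ^ 2 * Y 2 ^ 2
      + 10 * Y 0 ^ 2 * Y 2 * Y 3 - 3 * Y 0 ^ 2 * Y 3 ^ 2 - Y 0 * Y 1 ^ 3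
      + 18 * Y 0 * Y 1 ^ 2 * Y 3 - 2 * Y 0 * Y 1 * Y 2 ^ 2 + 20 * Y 0 * Y 1 * Y 2 * Y 3
      - 6 * Y 0 * Y 1 * Y 3 ^ 2 + 8 * Y 0 * Y 3 ^ 3 + 8 * Y 1 ^ 3 * Y 3
      + Y 1 ^ 2 * Y 2 ^ 2 + 10 * Y 1 ^ 2 * Y 2 * Y 3 - 3 * Y 1 ^ 2 * Y 3 ^ 2
      + 32 * Y 1 * Y 3 ^ 3 + 2 * Y 2 ^ 4 + 40 * Y 2 * Y 3 ^ 3 - 10 * Y 3 ^ 4]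

set_option maxHeartbeats 40000000 in
lemma cert_s23456_0 {k : Type*} [Field k] (hp : (19 : k) = 0) (a b u v : k)
    (h0 : a ^ 3 * b - 8 * a ^ 2 * b ^ 2 - 7 * a ^ 2 * b * u - 3 * a ^ 2 * b * v
      - 3 * a ^ 2 * u ^ 2 + 3 * a ^ 2 * v ^ 2 - 9 * a * b ^ 3 - 6 * a * b ^ 2 * u
      - 4 * a * b * u ^ 2 - 7 * a * b * v ^ 2 + 9 * a * u ^ 3 + 2 * a * u ^ 2 * v
      - 9 * a * u * v ^ 2 - 2 * a * v ^ 3 - 9 * b ^ 4 + 2 * b ^ 3 * u - b ^ 3 * v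
      + 9 * b ^ 2 * u ^ 2 + 9 * b ^ 2 * v ^ 2 - 5 * b * u ^ 3 - 2 * b * u ^ 2 * v
      - 9 * b * u * v ^ 2 - 2 * b * v ^ 3 - 2 * u ^ 4 + 2 * v ^ 4 = 0)
    (h1 : 5 * a ^ 4 + a ^ 3 * b + 4 * a ^ 3 * u - a ^ 3 * v - 4 * a ^ 2 * b ^ 2
      - 6 * a ^ 2 * b * u - 2 * a ^ 2 * u ^ 2 + 6 * a ^ 2 * v ^ 2 + 2 * a * b ^ 3
      + 6 * a * b ^ 2 * u - 3 * a * b ^ 2 * v - a * b * u ^ 2 - a * b * v ^ 2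
      - 5 * a * u ^ 3 - 2 * a * u ^ 2 * v - 9 * a * u * v ^ 2 - 2 * a * v ^ 3 + b ^ 4
      - 4 * b ^ 3 * u + 7 * b ^ 2 * u ^ 2 - 7 * b ^ 2 * v ^ 2 - 2 * b * u ^ 3
      + 2 * b * u ^ 2 * v - 9 * b * u * v ^ 2 - 2 * b * v ^ 3 + 4 * u ^ 4 + 8 * v ^ 4 = 0)
    (h2 : 4 * a ^ 3 * b - 2 * a ^ 3 * u - 3 * a ^ 2 * b ^ 2 - 4 * a ^ 2 * b * u
      + 4 * a ^ 2 * u ^ 2 + 2 * a ^ 2 * u * v + 5 * a ^ 2 * v ^ 2 + 2 * a * b ^ 3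
      - a * b ^ 2 * u + 4 * a * b * u ^ 2 - 4 * a * b * u * v - 9 * a * b * v ^ 2
      - 8 * a * u ^ 3 - b ^ 4 - 8 * b ^ 3 * u - 3 * b ^ 2 * u ^ 2 + 2 * b ^ 2 * u * v
      + 5 * b ^ 2 * v ^ 2 - 3 * b * u ^ 3 + 7 * u ^ 4 + 8 * u ^ 3 * v - 9 * v ^ 4 = 0)
    (h3 : -a ^ 3 * b + 2 * a ^ 3 * v - 7 * a ^ 2 * b * v + a ^ 2 * u ^ 2 - 9 * a ^ 2 * u * v
      - 3 * a ^ 2 * v ^ 2 - a * b ^ 3 - a * b ^ 2 * v - 2 * a * b * u ^ 2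
      + a * b * u * v - 6 * a * b * v ^ 2 + 8 * a * v ^ 3 + 8 * b ^ 3 * v
      + b ^ 2 * u ^ 2 - 9 * b ^ 2 * u * v - 3 * b ^ 2 * v ^ 2 - 6 * b * v ^ 3
      + 2 * u ^ 4 + 2 * u * v ^ 3 + 9 * v ^ 4 = 0)
    : a = 0 := by
  have key : a ^ 13 = 0 := by
    linear_combination (a ^ 9 * 6 + a ^ 8 * (-u * 2 - 5 * v) + a ^ 7 * (b ^ 2 * 4 + b * (u * 6 - 3 * v) - u ^ 2 * 7
      - u * 8 * v + 6 * v ^ 2) + a ^ 6 * (b ^ 2 * (u * 7 - 4 * v) + b * (-u ^ 2 * 4 - u * 2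
      * v - 8 * v ^ 2) + u ^ 3 * 9 + u ^ 2 * 8 * v + u * 3 * v ^ 2 + 6 * v ^ 3) + a ^ 5 *
      (-b ^ 4 * 4 + b ^ 3 * u * 6 + b ^ 2 * (-u ^ 2 * 7 + u * 2 * v + 6 * v ^ 2) + b * (u ^
      3 * 3 - u ^ 2 * 4 * v - u * 9 * v ^ 2 + 4 * v ^ 3) + u ^ 4 * 9 - u ^ 3 * 6 * v + u ^ 2
      * 3 * v ^ 2 - u * 2 * v ^ 3) + a ^ 4 * (-b ^ 5 - b ^ 4 * u * 7 + b ^ 3 * (u ^ 2 * 7 +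
      u * 6 * v + 3 * v ^ 2) + b ^ 2 * (u ^ 3 * 2 + u ^ 2 * 6 * v + u * 8 * v ^ 2 + 8 * v ^
      3) + b * (-u ^ 4 * 4 - u ^ 3 * 9 * v + u ^ 2 * 6 * v ^ 2 + u * 9 * v ^ 3) - u ^ 5 * 9
      + u ^ 4 * 6 * v - u ^ 3 * 6 * v ^ 2 + u ^ 2 * 6 * v ^ 3) + a ^ 3 * (b ^ 6 * 6 + b ^ 5
      * (-u * 4 - 5 * v) + b ^ 4 * (-u ^ 2 * 7 - u * v + 9 * v ^ 2) + b ^ 3 * (u ^ 3 * 7 + u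
      ^ 2 * 7 * v - u * 6 * v ^ 2 - 4 * v ^ 3) + b ^ 2 * (u ^ 4 * 4 + u ^ 3 * 3 * v + u ^ 2
      * 6 * v ^ 2 - u * 7 * v ^ 3) + b * (u ^ 5 * 2 - u ^ 3 * 8 * v ^ 2 + u ^ 2 * v ^ 3) - u
      ^ 6 * 6 + u ^ 3 * 3 * v ^ 3) + a ^ 2 * (b ^ 7 + b ^ 6 * (u * 8 + 8 * v) + b ^ 5 * (-u
      ^ 2 + u * 2 * v + 5 * v ^ 2) + b ^ 4 * (u ^ 3 * 8 - u ^ 2 * 3 * v - 4 * v ^ 3) + b ^ 3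
      * (u ^ 4 * 7 + u ^ 3 * 5 * v - u ^ 2 * 2 * v ^ 2 - u * 7 * v ^ 3) + b ^ 2 * (-u ^ 5 *
      5 + u ^ 4 * 2 * v + u ^ 3 * 6 * v ^ 2 - u ^ 2 * 7 * v ^ 3) + b * (-u ^ 6 * 9 - u ^ 3 *
      5 * v ^ 3)) + a * (b ^ 8 * 2 + b ^ 7 * (-u * 9 + 5 * v) + b ^ 6 * (-u ^ 2 * 3 + u * v
      + 2 * v ^ 2) + b ^ 5 * (u ^ 3 * 4 - u * 2 * v ^ 2 - 2 * v ^ 3) + b ^ 4 * (-u ^ 4 * 9 +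
      u ^ 3 * 9 * v + u ^ 2 * 7 * v ^ 2 + u * 5 * v ^ 3) + b ^ 3 * (-u ^ 5 * 9 - u ^ 4 * 2 *
      v + u ^ 3 * 5 * v ^ 2 - u ^ 2 * 9 * v ^ 3) + b ^ 2 * (-u ^ 6 * 6 + u ^ 3 * 3 * v ^ 3))
      - b ^ 9 * 4 + b ^ 8 * (u * 9 + 8 * v) + b ^ 7 * (u ^ 2 * 3 - u * 4 * v + v ^ 2) + b ^
      6 * (u ^ 3 * 2 + u ^ 2 * 8 * v + u * 6 * v ^ 2 - 8 * v ^ 3) + b ^ 5 * (-u ^ 4 * 5 + u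
      ^ 3 * 5 * v + u ^ 2 * 5 * v ^ 2 + u * 8 * v ^ 3) + b ^ 4 * (-u ^ 5 * 9 - u ^ 4 * v + u
      ^ 3 * 4 * v ^ 2 + u ^ 2 * 9 * v ^ 3) + b ^ 3 * (-u ^ 6 * 7 - u ^ 3 * 6 * v ^ 3)) * h0 +
      (a ^ 9 * 4 + a ^ 8 * (b * 7 + u * 4 - 8 * v) + a ^ 7 * (b ^ 2 * 2 + b * (-u * 3 - 5 * v) - u
      ^ 2 * 3 + u * 3 * v - 6 * v ^ 2) + a ^ 6 * (b ^ 3 * 2 + b ^ 2 * (-u * 9 - 7 * v) + b *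
      (u ^ 2 - u * v - 3 * v ^ 2) - u ^ 3 * 4 + u ^ 2 * 5 * v + u * 9 * v ^ 2 - 2 * v ^ 3) +
      a ^ 5 * (-b ^ 4 * 3 + b ^ 3 * (u * 4 - 8 * v) + b ^ 2 * (-u ^ 2 * 4 + u * 7 * v + v ^
      2) + b * (u ^ 2 * 8 * v - u * v ^ 2 + 2 * v ^ 3) - u ^ 4 * 2 + u ^ 3 * 2 * v + u ^ 2 *
      v ^ 2 + u * 9 * v ^ 3) + a ^ 4 * (-b ^ 5 * 6 + b ^ 4 * (-u * 3 + 9 * v) + b ^ 3 * (-u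
      ^ 2 * 3 - u * 4 * v) + b ^ 2 * (u ^ 3 * 3 - u ^ 2 * 9 * v - u * 2 * v ^ 2 - 8 * v ^ 3)
      + b * (-u ^ 4 * 3 - u ^ 3 * 2 * v - u ^ 2 * 7 * v ^ 2 + u * 7 * v ^ 3) - u ^ 5 * 9 - u
      ^ 4 * 5 * v - u ^ 3 * 3 * v ^ 2 - u ^ 2 * 7 * v ^ 3) + a ^ 3 * (-b ^ 6 * 2 + b ^ 5 *
      (-u * 8 + 3 * v) + b ^ 4 * (u ^ 2 * 6 + u * 8 * v - 6 * v ^ 2) + b ^ 3 * (u ^ 3 * 4 -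
      u ^ 2 * 2 * v + u * 4 * v ^ 2 + 2 * v ^ 3) + b ^ 2 * (u ^ 4 * 2 + u ^ 3 * 4 * v - u ^
      2 * 5 * v ^ 2 + u * 7 * v ^ 3) + b * (u ^ 5 * 9 - u ^ 4 * 4 * v + u ^ 3 * 6 * v ^ 2 +
      u ^ 2 * 5 * v ^ 3) - u ^ 6 * 3 - u ^ 3 * 4 * v ^ 3) + a ^ 2 * (b ^ 7 + b ^ 6 * (-u * 2
      - v) + b ^ 5 * (u ^ 2 * 5 + u * 8 * v + 7 * v ^ 2) + b ^ 4 * (-u ^ 3 * 5 - u ^ 2 * 3 *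
      v + u * 3 * v ^ 2 + 5 * v ^ 3) + b ^ 3 * (-u ^ 4 * 3 + u ^ 3 * 9 * v + u ^ 2 * 5 * v ^
      2 + u * 6 * v ^ 3) + b ^ 2 * (u ^ 5 * 8 + u ^ 4 * 5 * v - u ^ 2 * v ^ 3) + b * (u ^ 6
      * 5 - u ^ 3 * 6 * v ^ 3)) + a * (b ^ 8 * 3 + b ^ 7 * (-u * 2 + 3 * v) + b ^ 6 * (-u ^
      2 * 7 - u * 8 * v) + b ^ 5 * (u ^ 3 * 2 + u ^ 2 * 8 * v + u * 6 * v ^ 2 - 6 * v ^ 3) +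
      b ^ 4 * (-u ^ 4 * 8 - u ^ 3 * 5 * v - u ^ 2 * 4 * v ^ 2 - u * 8 * v ^ 3) + b ^ 3 * (u
      ^ 5 * 5 + u ^ 4 * 4 * v - u ^ 3 * v ^ 2 - u ^ 2 * 8 * v ^ 3) + b ^ 2 * (-u ^ 6 * 3 - u
      ^ 3 * 4 * v ^ 3)) - b ^ 9 * 6 + b ^ 8 * (u * 6 - 9 * v) + b ^ 7 * (-u ^ 2 * 3 + u * v)
      + b ^ 6 * (-u ^ 3 * 4 - u ^ 2 * 6 * v + u * 8 * v ^ 2) + b ^ 5 * (u ^ 4 * 3 - u ^ 3 *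
      5 * v - u ^ 2 * 3 * v ^ 2 - u * 4 * v ^ 3) + b ^ 4 * (u ^ 5 * 4 - u ^ 4 * 7 * v + u ^
      3 * 6 * v ^ 2 - u ^ 2 * 4 * v ^ 3) + b ^ 3 * (u ^ 6 * 6 + u ^ 3 * 8 * v ^ 3)) * h1 +
      (-a ^ 9 + a ^ 8 * (b * 2 + u * 6 + 5 * v) + a ^ 7 * (b ^ 2 * 5 + b * (-u * 4 + 7 * v) - u ^ 2
      * 7 - u * 6 * v - 7 * v ^ 2) + a ^ 6 * (-b ^ 3 * 7 + b ^ 2 * (-u * 6 + 9 * v) + b *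
      (-u ^ 2 * 4 + u * 6 * v - 5 * v ^ 2) - u ^ 3 * 7 + u ^ 2 * 8 * v - u * 6 * v ^ 2) + a
      ^ 5 * (b ^ 4 * 3 + b ^ 3 * (u * 7 + v) + b ^ 2 * (-u ^ 2 * 2 - u * 4 * v - 7 * v ^ 2)
      + b * (-u ^ 3 * 7 - u ^ 2 * 3 * v - u * 3 * v ^ 2 - 7 * v ^ 3) - u ^ 3 * 6 * v + u ^ 2
      * 3 * v ^ 2 - u * 5 * v ^ 3) + a ^ 4 * (b ^ 5 + b ^ 3 * (-u ^ 2 * 2 - u * 5 * v + v ^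
      2) + b ^ 2 * (u ^ 3 * 9 + u ^ 2 * 3 * v - u * 5 * v ^ 2 + v ^ 3) + b * (u ^ 3 * 6 * v
      + u ^ 2 * 7 * v ^ 2 + u * 4 * v ^ 3) + u ^ 3 * 2 * v ^ 2) + a ^ 3 * (-b ^ 6 + b ^ 5 *
      (u * 2 + 5 * v) + b ^ 4 * (u ^ 2 * 3 + u * 2 * v + v ^ 2) + b ^ 3 * (u ^ 2 * 2 * v - 8
      * v ^ 3) + b ^ 2 * (-u ^ 3 * 8 * v - u ^ 2 * 9 * v ^ 2 - u * 8 * v ^ 3) + b * (u ^ 3 *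
      2 * v ^ 2 - u ^ 2 * 8 * v ^ 3) - u ^ 3 * 5 * v ^ 3) + a ^ 2 * (b ^ 7 * 5 + b ^ 6 * (-u
      * 9 + 3 * v) + b ^ 5 * (-u ^ 2 * 7 + u * 5 * v + 4 * v ^ 2) + b ^ 4 * (u ^ 3 * 2 + u ^
      2 * 4 * v - u * 7 * v ^ 2 - 7 * v ^ 3) + b ^ 3 * (-u ^ 3 * 6 * v - u ^ 2 * v ^ 2 + u *
      8 * v ^ 3) + b ^ 2 * (u ^ 3 * 4 * v ^ 2 + u ^ 2 * 6 * v ^ 3) + b * u ^ 3 * 2 * v ^ 3)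
      + a * (-b ^ 8 * 2 + b ^ 7 * (u * 5 + 6 * v) + b ^ 6 * (u ^ 2 * 6 + u * 9 * v + 4 * v ^
      2) + b ^ 5 * (u ^ 3 * 7 + u ^ 2 * 6 * v - u * 8 * v ^ 2 + 9 * v ^ 3) + b ^ 4 * (-u ^ 3
      * 7 * v + u ^ 2 * 7 * v ^ 2 - u * 6 * v ^ 3) - b ^ 3 * u ^ 2 * 7 * v ^ 3 - b ^ 2 * u ^
      3 * 5 * v ^ 3) - b ^ 9 * 8 + b ^ 8 * (u * 5 - 3 * v) + b ^ 7 * (-u ^ 2 * 2 + 2 * v ^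
      2) + b ^ 6 * (u ^ 3 * 5 + u ^ 2 * 7 * v - u * 3 * v ^ 2 - 6 * v ^ 3) + b ^ 5 * (u ^ 3
      * 6 * v - u ^ 2 * 9 * v ^ 2 - u * 6 * v ^ 3) + b ^ 4 * (-u ^ 3 * 9 * v ^ 2 + u ^ 2 * 9
      * v ^ 3) - b ^ 3 * u ^ 3 * 9 * v ^ 3) * h2 +
      (a ^ 9 * 3 + a ^ 8 * (b * 2 - u * 8 - 3 * v) + a ^ 7 * (b ^ 2 * 8 + b * (-u * 6 + 8 * v) + u
      ^ 2 + u * 3 * v + 5 * v ^ 2) + a ^ 6 * (b ^ 3 * 4 + b ^ 2 * (u * 3 + 2 * v) + b * (-u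
      ^ 2 * 7 - u * v) + u ^ 3 * 8 + u ^ 2 * 7 * v + u * v ^ 2 - 8 * v ^ 3) + a ^ 5 * (b ^ 4
      + b ^ 3 * (u * 7 - 6 * v) + b ^ 2 * (u ^ 2 * 2 - u * 2 * v - 8 * v ^ 2) + b * (u ^ 3 *
      8 - u ^ 2 * 9 * v + u * 3 * v ^ 2 + 3 * v ^ 3) + u ^ 2 * 6 * v ^ 2 - u * 2 * v ^ 3) +
      a ^ 4 * (b ^ 5 * 7 + b ^ 4 * (u * 7 - 9 * v) + b ^ 3 * (u ^ 2 * 9 - u * 2 * v - 3 * v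
      ^ 2) + b ^ 2 * (u ^ 2 * 5 * v + u * 7 * v ^ 2) + b * u ^ 2 * 5 * v ^ 2 + u ^ 2 * 7 * v
      ^ 3) + a ^ 3 * (b ^ 6 * 2 + b ^ 5 * (-u * 5 + 8 * v) + b ^ 4 * (u ^ 2 * 7 - u * 2 * v
      + v ^ 2) + b ^ 3 * (u ^ 3 * 4 + u ^ 2 * v + 8 * v ^ 3)) + a ^ 2 * (b ^ 7 * 3 + b ^ 6 *
      (u * 4 + 4 * v) + b ^ 5 * (-u ^ 2 - u * v - 7 * v ^ 2)) + a * (-b ^ 8 * 6 + b ^ 7 *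
      (-u * 8 + 2 * v)) - b ^ 9 * 5) * h3 +
      (-a ^ 13 + a ^ 12 * (-b * 2 - u * 2 + 2 * v) + a ^ 11 * (b ^ 2 * 2 + b * (u + 3 * v) + u ^ 2
      * 2 + u * 4 * v) + a ^ 10 * (b ^ 3 * 3 + b ^ 2 * (u * 7 - v) + b * (u ^ 2 * 6 - u * 2
      * v) - u ^ 3 * 2 - u ^ 2 * 10 * v - u * 3 * v ^ 2 + v ^ 3) + a ^ 9 * (b ^ 4 * 7 + b ^
      3 * (-u + v) + b ^ 2 * (-u ^ 2 * 8 - u * v + 2 * v ^ 2) + b * (-u ^ 2 * 12 * v + u *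
      12 * v ^ 2 + 4 * v ^ 3) + u ^ 4 * 5 + u ^ 3 * 3 * v + u ^ 2 * 5 * v ^ 2 + u * v ^ 3) +
      a ^ 8 * (b ^ 5 * 2 + b ^ 4 * (u * 5 - 6 * v) + b ^ 3 * (u ^ 2 * 2 + u * 8 * v + 12 * v
      ^ 2) + b ^ 2 * (u ^ 3 * 5 - u ^ 2 * 4 * v + u * 9 * v ^ 2 + 6 * v ^ 3) + b * (-u ^ 4 *
      6 + u ^ 3 * 3 * v + u ^ 2 * 6 * v ^ 2 - u * 17 * v ^ 3 - 8 * v ^ 4) + u ^ 5 * 2 + u ^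
      4 * 4 * v - u ^ 3 * 4 * v ^ 2 - u ^ 2 * 7 * v ^ 3 - u * v ^ 4 + 4 * v ^ 5) + a ^ 7 *
      (b ^ 6 * 2 + b ^ 5 * (u * 16 - 10 * v) + b ^ 4 * (-u ^ 2 * 5 - 5 * v ^ 2) + b ^ 3 *
      (-u ^ 3 * 6 + u ^ 2 * v - u * 12 * v ^ 2 + 4 * v ^ 3) + b ^ 2 * (-u ^ 4 * 2 + u ^ 3 *
      7 * v - u ^ 2 * 3 * v ^ 2 - u * 5 * v ^ 3 - 11 * v ^ 4) + b * (u ^ 5 * 8 + u ^ 4 * 5 *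
      v - u ^ 3 * 4 * v ^ 2 + u ^ 2 * 11 * v ^ 3 + 3 * v ^ 5) - u ^ 6 * 2 + u ^ 5 * 4 * v +
      u ^ 4 * 7 * v ^ 2 + u ^ 3 * 12 * v ^ 3 - u ^ 2 * v ^ 4 - u * 4 * v ^ 5) + a ^ 6 * (-b
      ^ 7 * 4 + b ^ 6 * (-u * 2 + v) + b ^ 5 * (-u ^ 2 * 15 + u * 14 * v - 2 * v ^ 2) + b ^
      4 * (u ^ 3 * 8 + u ^ 2 * 20 * v + u * 3 * v ^ 2 - 2 * v ^ 3) + b ^ 3 * (u ^ 4 * 5 + u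
      ^ 2 * 10 * v ^ 2 - u * 7 * v ^ 3 - v ^ 4) + b ^ 2 * (-u ^ 5 * 6 - u ^ 4 * 13 * v - u ^
      3 * 27 * v ^ 2 + u ^ 2 * 2 * v ^ 3 - u * 3 * v ^ 4 + 5 * v ^ 5) + b * (-u ^ 6 * 10 + u
      ^ 5 * 5 * v + u ^ 4 * 7 * v ^ 2 + u ^ 3 * 8 * v ^ 3 + u ^ 2 * 18 * v ^ 4 - 3 * v ^ 6)
      - u ^ 7 * 3 - u ^ 6 * v + u ^ 5 * 4 * v ^ 2 + u ^ 4 * 4 * v ^ 3 + u ^ 2 * v ^ 5 - u *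
      5 * v ^ 6 + 4 * v ^ 7) + a ^ 5 * (-b ^ 8 + b ^ 7 * (u * 4 - 3 * v) + b ^ 6 * (u ^ 2 *
      5 - u * 2 * v + 12 * v ^ 2) + b ^ 5 * (-u ^ 3 * 4 + u ^ 2 * 6 * v - u * 10 * v ^ 2 + 2
      * v ^ 3) + b ^ 4 * (u ^ 4 * 19 + u ^ 3 * 6 * v + u ^ 2 * 12 * v ^ 2 - u * 10 * v ^ 3 +
      4 * v ^ 4) + b ^ 3 * (-u ^ 5 * 15 - u ^ 4 * 3 * v + u ^ 3 * v ^ 2 + u ^ 2 * 9 * v ^ 3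
      + u * 20 * v ^ 4 + 14 * v ^ 5) + b ^ 2 * (-u ^ 5 * 2 * v - u ^ 4 * 9 * v ^ 2 + u ^ 3 *
      13 * v ^ 3 + u ^ 2 * 2 * v ^ 4 + u * 9 * v ^ 5 + v ^ 6) + b * (u ^ 6 * 8 * v - u ^ 5 *
      9 * v ^ 2 + u ^ 4 * v ^ 3 - u ^ 3 * 7 * v ^ 4 + u ^ 2 * 15 * v ^ 5 - 6 * v ^ 7) + u ^
      8 * 2 - u ^ 7 * 3 * v - u ^ 6 * 4 * v ^ 2 - u ^ 5 * 6 * v ^ 3 - u ^ 4 * 3 * v ^ 4 - u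
      ^ 3 * 3 * v ^ 5 - u ^ 2 * 5 * v ^ 6 - u * 5 * v ^ 7) + a ^ 4 * (b ^ 9 * 6 - b ^ 8 * u
      * 3 + b ^ 7 * (u ^ 2 * 5 + u * 8 * v + 17 * v ^ 2) + b ^ 6 * (u ^ 3 * 2 + u ^ 2 * 6 *
      v + u * 11 * v ^ 2 + 4 * v ^ 3) + b ^ 5 * (u ^ 4 * 6 + u ^ 3 * 13 * v - u ^ 2 * 15 * v
      ^ 2 - u * 10 * v ^ 3 - 9 * v ^ 4) + b ^ 4 * (u ^ 5 * 7 + u ^ 4 * 18 * v + u ^ 2 * 9 *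
      v ^ 3 - u * v ^ 4 - 9 * v ^ 5) + b ^ 3 * (-u ^ 6 * 4 + u ^ 5 * 15 * v + u ^ 4 * 20 * v
      ^ 2 - u ^ 3 * 13 * v ^ 3 - u ^ 2 * 15 * v ^ 4 - u * 10 * v ^ 5 - 2 * v ^ 6) + b ^ 2 *
      (-u ^ 6 * 11 * v - u ^ 5 * 3 * v ^ 2 - u ^ 4 * v ^ 3 + u ^ 2 * 3 * v ^ 5 - u * 4 * v ^
      6 + 3 * v ^ 7) + b * (-u ^ 8 * 4 - u ^ 7 * 2 * v - u ^ 6 * 4 * v ^ 2 - u ^ 5 * 8 * v ^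
      3 - u ^ 4 * 5 * v ^ 4 + u ^ 3 * 6 * v ^ 5 + u ^ 2 * 6 * v ^ 6 - u * 2 * v ^ 7) + u ^ 9
      * 3 + u ^ 8 * 2 * v - u ^ 7 * 5 * v ^ 2 - u ^ 6 * 5 * v ^ 3 + u ^ 5 * 4 * v ^ 4 + u ^
      4 * v ^ 5 + u ^ 3 * 2 * v ^ 6 - u ^ 2 * v ^ 7) + a ^ 3 * (b ^ 10 * 6 + b ^ 9 * (-u + 4
      * v) + b ^ 8 * (-u ^ 2 * 8 + u * 8 * v + 3 * v ^ 2) + b ^ 7 * (u ^ 3 * 19 - u ^ 2 * 5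
      * v + u * 2 * v ^ 2 + 4 * v ^ 3) + b ^ 6 * (u ^ 4 - u ^ 2 * 2 * v ^ 2 - u * 10 * v ^ 3
      - 9 * v ^ 4) + b ^ 5 * (-u ^ 5 * 14 - u ^ 4 * 7 * v + u ^ 3 * 6 * v ^ 2 - u ^ 2 * 15 *
      v ^ 3 + u * 20 * v ^ 4 + 4 * v ^ 5) + b ^ 4 * (-u ^ 6 * 25 + u ^ 5 * v + u ^ 4 * 12 *
      v ^ 2 - u ^ 3 * 8 * v ^ 3 - u ^ 2 * 6 * v ^ 4 + u * 11 * v ^ 5 + 4 * v ^ 6) + b ^ 3 *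
      (-u ^ 7 * 18 - u ^ 6 * v + u ^ 5 * 8 * v ^ 2 + u ^ 4 * 5 * v ^ 3 + u ^ 3 * 15 * v ^ 4
      + u ^ 2 * 10 * v ^ 5 - u * 2 * v ^ 6 - 8 * v ^ 7) + b ^ 2 * (u ^ 8 * 7 + u ^ 7 * 3 * v
      + u ^ 6 * 14 * v ^ 2 + u ^ 5 * 9 * v ^ 3 + u ^ 4 * 6 * v ^ 4 - u ^ 3 * 7 * v ^ 5 - u ^
      2 * 3 * v ^ 6 - u * 6 * v ^ 7) + b * (u ^ 9 * 2 + u ^ 8 * 2 * v - u ^ 7 * 9 * v ^ 2 +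
      u ^ 6 * v ^ 3 - u ^ 4 * 4 * v ^ 5 - u ^ 3 * 2 * v ^ 6 - u ^ 2 * 6 * v ^ 7) + u ^ 7 * 3
      * v ^ 3 + u ^ 6 * 4 * v ^ 4 - u ^ 3 * v ^ 7) + a ^ 2 * (-b ^ 11 * 3 + b ^ 10 * (u + 3
      * v) + b ^ 9 * (-u ^ 2 * 2 - u * v + 5 * v ^ 2) + b ^ 8 * (-u ^ 3 * 2 + u ^ 2 * 8 * v
      + u * 2 * v ^ 2 + 3 * v ^ 3) + b ^ 7 * (-u ^ 4 + u ^ 3 * 11 * v + u ^ 2 * 4 * v ^ 2 +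
      u * 13 * v ^ 3) + b ^ 6 * (-u ^ 5 * 11 + u ^ 4 * 8 * v + u ^ 3 * 9 * v ^ 2 + u ^ 2 * 5
      * v ^ 3 - u * v ^ 4 + 10 * v ^ 5) + b ^ 5 * (-u ^ 6 * 13 - u ^ 5 * 4 * v - u ^ 4 * 4 *
      v ^ 2 + u ^ 3 * 18 * v ^ 3 + u ^ 2 * 7 * v ^ 4 + u * v ^ 5 + v ^ 6) + b ^ 4 * (u ^ 7 *
      2 - u ^ 6 * 14 * v - u ^ 5 * 5 * v ^ 2 + u ^ 4 * 9 * v ^ 3 - u ^ 2 * 6 * v ^ 5 - u * 5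
      * v ^ 6 - 5 * v ^ 7) + b ^ 3 * (u ^ 8 * 7 + u ^ 7 * 4 * v + u ^ 6 * 4 * v ^ 2 + u ^ 5
      * 6 * v ^ 3 + u ^ 4 * 2 * v ^ 4 - u ^ 3 * 19 * v ^ 5 - u ^ 2 * 5 * v ^ 6 + u * 2 * v ^
      7) + b ^ 2 * (-u ^ 9 * 2 - u ^ 8 * 2 * v - u ^ 7 * 7 * v ^ 2 - u ^ 6 * 12 * v ^ 3 - u
      ^ 5 * 6 * v ^ 4 - u ^ 4 * 8 * v ^ 5 + u ^ 2 * 4 * v ^ 7) + b * (-u ^ 10 * 2 - u ^ 6 *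
      2 * v ^ 4 + u ^ 3 * 4 * v ^ 7)) + a * (b ^ 11 * (-u + 9 * v) + b ^ 10 * (u ^ 2 * 3 + u
      * 7 * v - 8 * v ^ 2) + b ^ 9 * (u ^ 3 * 11 - u ^ 2 * v + u * 7 * v ^ 2 - 5 * v ^ 3) +
      b ^ 8 * (u ^ 4 * 3 + u ^ 3 * 12 * v + u * 3 * v ^ 3 + v ^ 4) + b ^ 7 * (-u ^ 5 * 20 -
      u ^ 4 * 6 * v + u ^ 3 * 4 * v ^ 2 + u ^ 2 * 5 * v ^ 3 + u * 12 * v ^ 4 - 9 * v ^ 5) +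
      b ^ 6 * (-u ^ 6 - u ^ 5 * 6 * v - u ^ 4 * 8 * v ^ 2 + u ^ 3 * 5 * v ^ 3 + u ^ 2 * 6 *
      v ^ 4 - u * 2 * v ^ 5) + b ^ 5 * (-u ^ 7 * 6 - u ^ 6 * 7 * v - u ^ 5 * 10 * v ^ 2 - u
      ^ 4 * 9 * v ^ 3 + u ^ 2 * 11 * v ^ 5 - u * 6 * v ^ 6 + 7 * v ^ 7) + b ^ 4 * (u ^ 8 * 7
      + u ^ 7 * 3 * v - u ^ 6 * 7 * v ^ 2 - u ^ 5 * 7 * v ^ 3 + u ^ 4 * 10 * v ^ 4 - u ^ 3 *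
      14 * v ^ 5 + u ^ 2 * 3 * v ^ 6) + b ^ 3 * (u ^ 9 - u ^ 7 * 4 * v ^ 2 + u ^ 6 * 3 * v ^
      3 + u ^ 5 * 4 * v ^ 4 - u ^ 4 * v ^ 5 + u ^ 2 * v ^ 7) + b ^ 2 * (u ^ 7 * 3 * v ^ 3 +
      u ^ 6 * 4 * v ^ 4 - u ^ 3 * v ^ 7)) - b ^ 13 * 2 + b ^ 12 * 6 * v + b ^ 11 * (u ^ 2 *
      7 - u * 7 * v + 2 * v ^ 2) + b ^ 10 * (-u ^ 3 * 9 + u ^ 2 * 4 * v - u * 5 * v ^ 2 - 13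
      * v ^ 3) + b ^ 9 * (u ^ 4 * 6 + u ^ 3 * 10 * v + u ^ 2 * 9 * v ^ 2 + u * 6 * v ^ 3) +
      b ^ 8 * (-u ^ 5 * 4 + u ^ 4 * v - u ^ 3 * 13 * v ^ 2 - u ^ 2 * 5 * v ^ 3 + u * v ^ 4 +
      7 * v ^ 5) + b ^ 7 * (u ^ 6 * 2 + u ^ 5 * 2 * v - u ^ 4 * v ^ 2 - u ^ 3 * 13 * v ^ 3 +
      u ^ 2 * 6 * v ^ 4 - u * 6 * v ^ 5) + b ^ 6 * (u ^ 7 * 3 + u ^ 6 * v - u ^ 5 * 3 * v ^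
      2 + u ^ 3 * 10 * v ^ 4 - u ^ 2 * v ^ 5 - u * 5 * v ^ 6 - 2 * v ^ 7) + b ^ 5 * (-u ^ 8
      * 2 - u ^ 7 * 3 * v + u ^ 6 * 6 * v ^ 2 + u ^ 5 * 5 * v ^ 3 + u ^ 4 * 8 * v ^ 4 + u ^
      3 * 16 * v ^ 5 - u ^ 2 * 3 * v ^ 6 - u * 2 * v ^ 7) + b ^ 4 * (-u ^ 9 * 3 + u ^ 7 * 2
      * v ^ 2 - u ^ 5 * 6 * v ^ 4 + u ^ 4 * 4 * v ^ 5 - u ^ 3 * 7 * v ^ 6 + u ^ 2 * 5 * v ^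
      7) + b ^ 3 * (-u ^ 10 * 2 + u ^ 7 * v ^ 3 + u ^ 6 * 2 * v ^ 4 - u ^ 3 * 7 * v ^ 7)) * hp
  exact pow_eq_zero_iff (by norm_num) |>.mp key

lemma cert_s23456_1 {k : Type*} [Field k] (hp : (19 : k) = 0) (b u v : k)
    (h0 : -9 * b ^ 4 + 2 * b ^ 3 * u - b ^ 3 * v + 9 * b ^ 2 * u ^ 2 + 9 * b ^ 2 * v ^ 2
      - 5 * b * u ^ 3 - 2 * b * u ^ 2 * v - 9 * b * u * v ^ 2 - 2 * b * v ^ 3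
      - 2 * u ^ 4 + 2 * v ^ 4 = 0)
    (h1 : b ^ 4 - 4 * b ^ 3 * u + 7 * b ^ 2 * u ^ 2 - 7 * b ^ 2 * v ^ 2 - 2 * b * u ^ 3
      + 2 * b * u ^ 2 * v - 9 * b * u * v ^ 2 - 2 * b * v ^ 3 + 4 * u ^ 4 + 8 * v ^ 4 = 0)
    (h2 : -b ^ 4 - 8 * b ^ 3 * u - 3 * b ^ 2 * u ^ 2 + 2 * b ^ 2 * u * v + 5 * b ^ 2 * v ^ 2
      - 3 * b * u ^ 3 + 7 * u ^ 4 + 8 * u ^ 3 * v - 9 * v ^ 4 = 0)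
    (h3 : 8 * b ^ 3 * v + b ^ 2 * u ^ 2 - 9 * b ^ 2 * u * v - 3 * b ^ 2 * v ^ 2 - 6 * b * v ^ 3
      + 2 * u ^ 4 + 2 * u * v ^ 3 + 9 * v ^ 4 = 0)
    : b = 0 := by
  have key : b ^ 7 = 0 := by
    linear_combination (-b ^ 3 * 6 + b ^ 2 * (-u * 8 + 9 * v) + b * (u ^ 2 * 4 + u * 3 * v + 3 * v ^ 2) - u ^ 3 * 2
      - u ^ 2 * 7 * v - u * 7 * v ^ 2 + 7 * v ^ 3) * h0 +
      (b ^ 2 * (-u * 7 - 5 * v) + b * (u ^ 2 * 9 + u * v - 6 * v ^ 2) - u ^ 3 * 6 + u ^ 2 * v + u *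
      6 * v ^ 2 - v ^ 3) * h1 +
      (-b ^ 3 * 4 + b ^ 2 * (u * 9 + 3 * v) + b * (-u ^ 2 * 7 + 5 * v ^ 2) - u ^ 3 * 8 - u ^ 2 * 7
      * v + u * 8 * v ^ 2 + 7 * v ^ 3) * h2 +
      (b ^ 3 * 8 + b ^ 2 * (u - 8 * v) + b * (-u ^ 2 * 3 + u * 6 * v - 8 * v ^ 2)) * h3 +
      (-b ^ 7 * 3 + b ^ 6 * (-u * 4 + v) + b ^ 5 * (u ^ 2 * 6 + u * 4 * v + 11 * v ^ 2) + b ^ 4 *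
      (u ^ 3 * 3 - u ^ 2 * 5 * v - u * 13 * v ^ 2 + v ^ 3) + b ^ 3 * (-u ^ 4 * 12 - u ^ 3 *
      v + u ^ 2 * 7 * v ^ 2 - u * 3 * v ^ 3 - 13 * v ^ 4) + b ^ 2 * (u ^ 4 * v + u ^ 3 * 10
      * v ^ 2 + u ^ 2 * 6 * v ^ 3 + u * 12 * v ^ 4 - 2 * v ^ 5) + b * (-u ^ 6 - u ^ 4 * 4 *
      v ^ 2 - u ^ 3 * 4 * v ^ 3 - u ^ 2 * 7 * v ^ 4 + 9 * v ^ 6) + u ^ 7 * 4 + u ^ 6 * 5 * v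
      - u ^ 5 * 2 * v ^ 2 - u ^ 4 * 5 * v ^ 3 - u ^ 3 * 4 * v ^ 4 - u ^ 2 * 3 * v ^ 5 + u *
      2 * v ^ 6 + 3 * v ^ 7) * hp
  exact pow_eq_zero_iff (by norm_num) |>.mp key

lemma cert_s23456_2 {k : Type*} [Field k] (hp : (19 : k) = 0) (u v : k)
    (h0 : -2 * u ^ 4 + 2 * v ^ 4 = 0)
    (h1 : 4 * u ^ 4 + 8 * v ^ 4 = 0)
    : u = 0 := by
  have key : u ^ 4 = 0 := by
    linear_combination (6) * h0 +
      (8) * h1 +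
      (-u ^ 4 - 4 * v ^ 4) * hp
  exact pow_eq_zero_iff (by norm_num) |>.mp key

lemma cert_s23456_3 {k : Type*} [Field k] (hp : (19 : k) = 0) (v : k)
    (h0 : 2 * v ^ 4 = 0)
    : v = 0 := by
  have key : v ^ 4 = 0 := by
    linear_combination (-9) * h0 +
      (v ^ 4) * hp
  exact pow_eq_zero_iff (by norm_num) |>.mp key

set_option maxHeartbeats 4000000 in
lemma cert_s23456 (k : Type) [Field k] (hp : ((19 : ℕ) : k) = 0) (y : Fin 4 → k)
    (h : ∀ i, aeval y (grad_s23456 i) = 0) : y = 0 := by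
  push_cast at hp
  obtain ⟨a, ha⟩ : ∃ a, a = y 0 := ⟨_, rfl⟩
  obtain ⟨b, hb⟩ : ∃ b, b = y 1 := ⟨_, rfl⟩
  obtain ⟨u, hu⟩ : ∃ u, u = y 2 := ⟨_, rfl⟩
  obtain ⟨v, hv⟩ : ∃ v, v = y 3 := ⟨_, rfl⟩
  have h0 : a ^ 3 * b - 8 * a ^ 2 * b ^ 2 - 7 * a ^ 2 * b * u - 3 * a ^ 2 * b * v
      - 3 * a ^ 2 * u ^ 2 + 3 * a ^ 2 * v ^ 2 - 9 * a * b ^ 3 - 6 * a * b ^ 2 * u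
      - 4 * a * b * u ^ 2 - 7 * a * b * v ^ 2 + 9 * a * u ^ 3 + 2 * a * u ^ 2 * v
      - 9 * a * u * v ^ 2 - 2 * a * v ^ 3 - 9 * b ^ 4 + 2 * b ^ 3 * u - b ^ 3 * v
      + 9 * b ^ 2 * u ^ 2 + 9 * b ^ 2 * v ^ 2 - 5 * b * u ^ 3 - 2 * b * u ^ 2 * v
      - 9 * b * u * v ^ 2 - 2 * b * v ^ 3 - 2 * u ^ 4 + 2 * v ^ 4 = 0 := by
    have e := h 0
    simp [grad_s23456, Y, ← ha, ← hb, ← hu, ← hv] at e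
    linear_combination e + (-a ^ 3 * b + a ^ 2 * (-b ^ 2 * 5 + b * u * 2) + a * (-b ^ 3 * 5 + b ^ 2 * u * 6 - b * v ^ 2
      + u ^ 3 - u * v ^ 2) - b ^ 4 * 2 + b ^ 3 * u * 3 + b ^ 2 * u ^ 2 * 2 + b * (-u ^ 3 * 5
      - u * v ^ 2)) * hp
  have h1 : 5 * a ^ 4 + a ^ 3 * b + 4 * a ^ 3 * u - a ^ 3 * v - 4 * a ^ 2 * b ^ 2
      - 6 * a ^ 2 * b * u - 2 * a ^ 2 * u ^ 2 + 6 * a ^ 2 * v ^ 2 + 2 * a * b ^ 3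
      + 6 * a * b ^ 2 * u - 3 * a * b ^ 2 * v - a * b * u ^ 2 - a * b * v ^ 2
      - 5 * a * u ^ 3 - 2 * a * u ^ 2 * v - 9 * a * u * v ^ 2 - 2 * a * v ^ 3 + b ^ 4
      - 4 * b ^ 3 * u + 7 * b ^ 2 * u ^ 2 - 7 * b ^ 2 * v ^ 2 - 2 * b * u ^ 3
      + 2 * b * u ^ 2 * v - 9 * b * u * v ^ 2 - 2 * b * v ^ 3 + 4 * u ^ 4 + 8 * v ^ 4 = 0 := by
    have e := h 1
    simp [grad_s23456, Y, ← ha, ← hb, ← hu, ← hv] at e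
    linear_combination e + (a ^ 3 * (-b * 3 + u) + a ^ 2 * (-b ^ 2 * 7 + b * u * 6) + a * (-b ^ 3 * 6 + b ^ 2 * u * 9 +
      b * (u ^ 2 * 3 - v ^ 2) - u ^ 3 * 5 - u * v ^ 2) - b ^ 4 + b ^ 3 * u * 4 + b ^ 2 * (u
      ^ 2 - v ^ 2) + b * (-u ^ 3 * 8 - u * v ^ 2) + u ^ 4 * 4) * hp
  have h2 : 4 * a ^ 3 * b - 2 * a ^ 3 * u - 3 * a ^ 2 * b ^ 2 - 4 * a ^ 2 * b * u
      + 4 * a ^ 2 * u ^ 2 + 2 * a ^ 2 * u * v + 5 * a ^ 2 * v ^ 2 + 2 * a * b ^ 3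
      - a * b ^ 2 * u + 4 * a * b * u ^ 2 - 4 * a * b * u * v - 9 * a * b * v ^ 2
      - 8 * a * u ^ 3 - b ^ 4 - 8 * b ^ 3 * u - 3 * b ^ 2 * u ^ 2 + 2 * b ^ 2 * u * v
      + 5 * b ^ 2 * v ^ 2 - 3 * b * u ^ 3 + 7 * u ^ 4 + 8 * u ^ 3 * v - 9 * v ^ 4 = 0 := by
    have e := h 2
    simp [grad_s23456, Y, ← ha, ← hb, ← hu, ← hv] at e
    linear_combination e + (a ^ 3 * b + a ^ 2 * (b ^ 2 * 3 + u ^ 2) + a * (b ^ 3 * 3 + b ^ 2 * u * 3 + b * (-u ^ 2 * 14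
      - v ^ 2)) + b ^ 4 - b ^ 2 * u ^ 2 * 12 + b * u ^ 3 * 15 + u ^ 4 * 3 - v ^ 4) * hp
  have h3 : -a ^ 3 * b + 2 * a ^ 3 * v - 7 * a ^ 2 * b * v + a ^ 2 * u ^ 2 - 9 * a ^ 2 * u * v
      - 3 * a ^ 2 * v ^ 2 - a * b ^ 3 - a * b ^ 2 * v - 2 * a * b * u ^ 2
      + a * b * u * v - 6 * a * b * v ^ 2 + 8 * a * v ^ 3 + 8 * b ^ 3 * v
      + b ^ 2 * u ^ 2 - 9 * b ^ 2 * u * v - 3 * b ^ 2 * v ^ 2 - 6 * b * v ^ 3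
      + 2 * u ^ 4 + 2 * u * v ^ 3 + 9 * v ^ 4 = 0 := by
    have e := h 3
    simp [grad_s23456, Y, ← ha, ← hb, ← hu, ← hv] at e
    linear_combination e + (a ^ 2 * (-b * v - u * v) + a * (-b ^ 2 * v - b * u * v) - b ^ 2 * u * v - b * 2 * v ^ 3 - u
      * 2 * v ^ 3 + v ^ 4) * hp
  have z0 : a = 0 := cert_s23456_0 hp a b u v (by linear_combination h0) (by linear_combination h1) (by linear_combination h2) (by linear_combination h3)
  have z1 : b = 0 := cert_s23456_1 hp b u v 
    (by have e := h0; simp only [z0] at e; linear_combination e) 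
    (by have e := h1; simp only [z0] at e; linear_combination e) 
    (by have e := h2; simp only [z0] at e; linear_combination e) 
    (by have e := h3; simp only [z0] at e; linear_combination e)
  have z2 : u = 0 := cert_s23456_2 hp u v 
    (by have e := h0; simp only [z0, z1] at e; linear_combination e) 
    (by have e := h1; simp only [z0, z1] at e; linear_combination e)
  have z3 : v = 0 := cert_s23456_3 hp v 
    (by have e := h0; simp only [z0, z1, z2] at e; linear_combination e)
  funext i
  fin_cases i
  · exact ha.symm.trans z0
  · exact hb.symm.trans z1
  · exact hu.symm.trans z2
  · exact hv.symm.trans z3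

lemma coords (x : Fin 4 → ℂ) (h : (![x 0, x 1, (x 2 + x 3) / 2, (x 2 - x 3) / 2] : Fin 4 → ℂ) = 0) :
    x = 0 := by
  have h0 : x 0 = 0 := congrFun h 0
  have h1 : x 1 = 0 := congrFun h 1
  have h2 : (x 2 + x 3) / 2 = 0 := congrFun h 2
  have h3 : (x 2 - x 3) / 2 = 0 := congrFun h 3
  funext i
  fin_cases i
  · exact h0
  · exact h1
  · change x 2 = 0
    linear_combination h2 + h3
  · change x 3 = 0
    linear_combination h2 - h3

set_option maxHeartbeats 4000000 in
lemma smooth_s123 (x : Fin 4 → ℂ) (h : ∀ i : Fin 4, eval x (pderiv i polyS123) = 0) : x = 0 := by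
  apply coords
  refine transfer 13 (by norm_num) grad_s123 2 ?_ cert_s123 _ ?_
  · intro i c x
    fin_cases i <;> simp [grad_s123, Y] <;> ring
  · have e0 := h 0
    have e1 := h 1
    have e2 := h 2
    have e3 := h 3
    simp [polyS123, polyS, polyF, polyR, polyR1, polyR2, pderiv_X, Derivation.leibniz, pderiv_two_zero, pderiv_three_zero, pderiv_four_zero] at e0 e1 e2 e3
    intro i
    fin_cases i <;> simp [grad_s123, Y]
    · linear_combination e0
    · linear_combination e1
    · linear_combination e2 + e3
    · linear_combination e2 - e3

set_option maxHeartbeats 4000000 in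
lemma smooth_s456 (x : Fin 4 → ℂ) (h : ∀ i : Fin 4, eval x (pderiv i polyS456) = 0) : x = 0 := by
  apply coords
  refine transfer 13 (by norm_num) grad_s456 2 ?_ cert_s456 _ ?_
  · intro i c x
    fin_cases i <;> simp [grad_s456, Y] <;> ring
  · have e0 := h 0
    have e1 := h 1
    have e2 := h 2
    have e3 := h 3
    simp [polyS456, polyS, polyF, polyR, polyR1, polyR2, pderiv_X, Derivation.leibniz, pderiv_two_zero, pderiv_three_zero, pderiv_four_zero] at e0 e1 e2 e3
    intro i
    fin_cases i <;> simp [grad_s456, Y]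
    · linear_combination e0
    · linear_combination e1
    · linear_combination e2 + e3
    · linear_combination e2 - e3

set_option maxHeartbeats 4000000 in
lemma smooth_s3456 (x : Fin 4 → ℂ) (h : ∀ i : Fin 4, eval x (pderiv i polyS3456) = 0) : x = 0 := by
  apply coords
  refine transfer 13 (by norm_num) grad_s3456 3 ?_ cert_s3456 _ ?_
  · intro i c x
    fin_cases i <;> simp [grad_s3456, Y] <;> ring
  · have e0 := h 0
    have e1 := h 1
    have e2 := h 2
    have e3 := h 3
    simp [polyS3456, polyS, polyF, polyR, polyR1, polyR2, pderiv_X, Derivation.leibniz, pderiv_two_zero, pderiv_three_zero, pderiv_four_zero] at e0 e1 e2 e3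
    intro i
    fin_cases i <;> simp [grad_s3456, Y]
    · linear_combination e0
    · linear_combination e1
    · linear_combination e2 + e3
    · linear_combination e2 - e3

set_option maxHeartbeats 4000000 in
lemma smooth_s23456 (x : Fin 4 → ℂ) (h : ∀ i : Fin 4, eval x (pderiv i polyS23456) = 0) : x = 0 := by
  apply coords
  refine transfer 19 (by norm_num) grad_s23456 4 ?_ cert_s23456 _ ?_
  · intro i c x
    fin_cases i <;> simp [grad_s23456, Y] <;> ring
  · have e0 := h 0
    have e1 := h 1
    have e2 := h 2
    have e3 := h 3
    simp [polyS23456, polyS, polyF, polyR, polyR1, polyR2, pderiv_X, Derivation.leibniz, pderiv_two_zero, pderiv_three_zero, pderiv_four_zero] at e0 e1 e2 e3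
    intro i
    fin_cases i <;> simp [grad_s23456, Y]
    · linear_combination e0
    · linear_combination e1
    · linear_combination e2 + e3
    · linear_combination e2 - e3

lemma smooth_S12 (x : Fin 4 → ℂ) (h : ∀ i : Fin 4, eval x (pderiv i polyS12) = 0) : x = 0 := by
  have e0 := h 0
  have e1 := h 1
  have e2 := h 2
  have e3 := h 3
  simp [polyS12, polyS, polyF, pderiv_X, Derivation.leibniz, pderiv_two_zero, pderiv_three_zero, pderiv_four_zero, -mul_eq_zero, -neg_eq_zero] at e0 e1 e2 e3
  funext i
  fin_cases i
  · change x 0 = 0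
    linear_combination (0) * e0 + (1/3) * e1 + (0) * e2 + (0) * e3
  · change x 1 = 0
    linear_combination (1/3) * e0 + (0) * e1 + (0) * e2 + (0) * e3
  · change x 2 = 0
    linear_combination (0) * e0 + (0) * e1 + (0) * e2 + (-1/2) * e3
  · change x 3 = 0
    linear_combination (0) * e0 + (0) * e1 + (-1/2) * e2 + (0) * e3

lemma smooth_S23 (x : Fin 4 → ℂ) (h : ∀ i : Fin 4, eval x (pderiv i polyS23) = 0) : x = 0 := by
  have e0 := h 0
  have e1 := h 1
  have e2 := h 2
  have e3 := h 3
  simp [polyS23, polyS, polyF, pderiv_X, Derivation.leibniz, pderiv_two_zero, pderiv_three_zero, pderiv_four_zero] at e0 e1 e2 e3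
  funext i
  fin_cases i
  · change x 0 = 0
    linear_combination (-1/6) * e0 + (1/6) * e1 + (-1/6) * e2 + (-1/6) * e3
  · change x 1 = 0
    linear_combination (1/6) * e0 + (0) * e1 + (0) * e2 + (0) * e3
  · change x 2 = 0
    linear_combination (-1/6) * e0 + (0) * e1 + (0) * e2 + (-1/2) * e3
  · change x 3 = 0
    linear_combination (-1/6) * e0 + (0) * e1 + (-1/2) * e2 + (0) * e3

lemma smooth_S34 (x : Fin 4 → ℂ) (h : ∀ i : Fin 4, eval x (pderiv i polyS34) = 0) : x = 0 := by
  have e0 := h 0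
  have e1 := h 1
  have e2 := h 2
  have e3 := h 3
  simp [polyS34, polyS, polyF, pderiv_X, Derivation.leibniz, pderiv_two_zero, pderiv_three_zero, pderiv_four_zero] at e0 e1 e2 e3
  funext i
  fin_cases i
  · change x 0 = 0
    linear_combination (-4/11) * e0 + (-3/11) * e1 + (-5/11) * e2 + (-5/11) * e3
  · change x 1 = 0
    linear_combination (-3/11) * e0 + (-4/11) * e1 + (-5/11) * e2 + (-5/11) * e3
  · change x 2 = 0
    linear_combination (-5/11) * e0 + (-5/11) * e1 + (-4/11) * e2 + (-19/22) * e3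
  · change x 3 = 0
    linear_combination (-5/11) * e0 + (-5/11) * e1 + (-19/22) * e2 + (-4/11) * e3

lemma smooth_S56 (x : Fin 4 → ℂ) (h : ∀ i : Fin 4, eval x (pderiv i polyS56) = 0) : x = 0 := by
  have e0 := h 0
  have e1 := h 1
  have e2 := h 2
  have e3 := h 3
  simp [polyS56, polyS, polyF, pderiv_X, Derivation.leibniz, pderiv_two_zero, pderiv_three_zero, pderiv_four_zero] at e0 e1 e2 e3
  funext i
  fin_cases i
  · change x 0 = 0
    linear_combination (-1/6) * e0 + (1/3) * e1 + (0) * e2 + (0) * e3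
  · change x 1 = 0
    linear_combination (1/3) * e0 + (-1/6) * e1 + (0) * e2 + (0) * e3
  · change x 2 = 0
    linear_combination (0) * e0 + (0) * e1 + (1/6) * e2 + (-1/3) * e3
  · change x 3 = 0
    linear_combination (0) * e0 + (0) * e1 + (-1/3) * e2 + (1/6) * e3

/-- Each of the eight auxiliary surfaces `S₁,₂, S₂,₃, S₃,₄, S₅,₆, S₁,₂,₃, S₄,₅,₆,
S₃,₄,₅,₆, S₂,₃,₄,₅,₆` is smooth: the only common zero in `ℂ⁴` of the four partial
derivatives of its defining polynomial is `0`. -/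
theorem eight_surfaces_smooth :
    ∀ G ∈ [polyS12, polyS23, polyS34, polyS56, polyS123, polyS456, polyS3456, polyS23456],
      ∀ x : Fin 4 → ℂ, (∀ i : Fin 4, eval x (pderiv i G) = 0) → x = 0 := by
  intro G hG x hx
  simp only [List.mem_cons, List.not_mem_nil, or_false] at hG
  rcases hG with rfl | rfl | rfl | rfl | rfl | rfl | rfl | rfl
  · exact smooth_S12 x hx
  · exact smooth_S23 x hx
  · exact smooth_S34 x hx
  · exact smooth_S56 x hx
  · exact smooth_s123 x hx
  · exact smooth_s456 x hx
  · exact smooth_s3456 x hx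
  · exact smooth_s23456 x hx
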